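/- arXiv:1410.0346 — 5 statements merged into one kernel-verified Lean document; each statement's English description precedes it below -/
import Mathlib

section
/- Let M ≥ 2 and let μ̂_j = A_j y + b_j (j = 1,…,M) where every A_j is an orthoprojector (A_j = A_jᵀ = A_j²), with noise ξ having i.i.d. N(0,σ²) coordinates. Let σ̂² be any estimator (measurable function of y) and set δ = P(|σ² − σ̂²| > σ²/8); assume δ < 1. Let θ̂_σ̂ be any minimizer over the simplex Λ^M of W(θ) = ‖μ̂_θ‖² − 2yᵀμ̂_θ + 2σ̂² Tr(A_θ) + (1/2)pen(θ). Then for every x > 0, with probability at least 1 − δ − 2exp(−x), ‖μ̂_{θ̂_σ̂} − f‖² ≤ min_{j=1,…,M} ‖μ̂_j − f‖² + 64σ²(x + 2 log M). -/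
open MeasureTheory ProbabilityTheory Finset

noncomputable section

/-- Squared Euclidean norm on `Fin n → ℝ`. -/
def sqNorm {n : ℕ} (v : Fin n → ℝ) : ℝ := ∑ i, (v i) ^ 2

/-- The simplex `Λ^M` of probability vectors in `ℝ^M`. -/
def simplex (M : ℕ) : Set (Fin M → ℝ) := {θ | (∀ j, 0 ≤ θ j) ∧ ∑ j, θ j = 1}

/-- Operator norm (ℓ²→ℓ²) of a square matrix. -/
def opNorm {n : ℕ} (A : Matrix (Fin n) (Fin n) ℝ) : ℝ :=
  sSup {c | ∃ x : Fin n → ℝ, sqNorm x ≤ 1 ∧ c = Real.sqrt (sqNorm (A.mulVec x))}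

/-- The distribution of a vector with i.i.d. `N(0,σ²)` coordinates. -/
def gaussPi (n : ℕ) (σ : ℝ) : Measure (Fin n → ℝ) :=
  Measure.pi fun _ => gaussianReal 0 ⟨σ ^ 2, sq_nonneg σ⟩

/-- The aggregated affine estimator `μ̂_θ = A_θ y + b_θ = ∑_j θ_j (A_j y + b_j)`. -/
def muV {n M : ℕ} (A : Fin M → Matrix (Fin n) (Fin n) ℝ) (b : Fin M → Fin n → ℝ)
    (y : Fin n → ℝ) (θ : Fin M → ℝ) : Fin n → ℝ :=
  ∑ j, θ j • ((A j).mulVec y + b j)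

/-- Mallows' `C_p` criterion. -/
def Cp {n M : ℕ} (A : Fin M → Matrix (Fin n) (Fin n) ℝ) (b : Fin M → Fin n → ℝ)
    (σ : ℝ) (y : Fin n → ℝ) (θ : Fin M → ℝ) : ℝ :=
  sqNorm (muV A b y θ) - 2 * ∑ i, y i * muV A b y θ i
    + 2 * σ ^ 2 * ∑ j, θ j * (A j).trace

/-- The penalty `pen(θ) = ∑_j θ_j ‖μ̂_θ - μ̂_j‖²`. -/
def pen {n M : ℕ} (A : Fin M → Matrix (Fin n) (Fin n) ℝ) (b : Fin M → Fin n → ℝ)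
    (y : Fin n → ℝ) (θ : Fin M → ℝ) : ℝ :=
  ∑ j, θ j * sqNorm (muV A b y θ - ((A j).mulVec y + b j))

/-- The penalized criterion `H_pen(θ) = C_p(θ) + pen(θ)/2`. -/
def Hpen {n M : ℕ} (A : Fin M → Matrix (Fin n) (Fin n) ℝ) (b : Fin M → Fin n → ℝ)
    (σ : ℝ) (y : Fin n → ℝ) (θ : Fin M → ℝ) : ℝ :=
  Cp A b σ y θ + pen A b y θ / 2

/-- The criterion `W(θ)` where the true variance is replaced by an estimate `σ̂²`. -/
def Wfun {n M : ℕ} (A : Fin M → Matrix (Fin n) (Fin n) ℝ) (b : Fin M → Fin n → ℝ)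
    (σ2hat : ℝ) (y : Fin n → ℝ) (θ : Fin M → ℝ) : ℝ :=
  sqNorm (muV A b y θ) - 2 * ∑ i, y i * muV A b y θ i
    + 2 * σ2hat * ∑ j, θ j * (A j).trace + pen A b y θ / 2

/-!
On the simplex the penalty turns the criterion into `W θ = ‖μ θ‖² / 2 + (a linear function of θ)`.
Its strong convexity improves `W θ̂ ≤ W e_j` by `‖μ θ̂ - μ̂_j‖² / 2`, which yields the oracle
inequality `‖μ θ̂ - f‖² ≤ ‖μ̂_j - f‖² + ∑ θ̂_k Z_{kj}`, where
`Z_{kj} = 2⟨ξ, d⟩ - 2 σ̂² tr B - ‖d‖² / 2` with `B = A_k - A_j` and `d = μ̂_k - μ̂_j = B ξ + v`.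

Replacing `σ̂²` by `σ²` costs at most `σ² |tr B| / 4 ≤ σ² tr (B²) / 4`, because `|tr B| ≤ tr (B²)`
for a difference of two orthoprojectors. The resulting quantity `noiseExcess` satisfies
`E exp (noiseExcess / (64 σ²)) ≤ 1`: in an eigenbasis of `B` it is a sum of independent terms, each
handled by an explicit one-dimensional Gaussian integral. Markov's inequality and a union bound over
the `M²` pairs `(k, j)` conclude.
-/

open scoped Matrix

section GaussianIntegral

lemma exp_neg_div_one_sub_le {t : ℝ} (ht : t < 1) : Real.exp (-(t / (1 - t))) ≤ 1 - t := by
  have h1t : 0 < 1 - t := sub_pos.2 ht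
  have hinv : (1 - t)⁻¹ ≤ Real.exp (t / (1 - t)) := by
    refine (Real.add_one_le_exp _).trans' (le_of_eq ?_)
    field_simp
    ring
  rw [Real.exp_neg]
  exact inv_le_of_inv_le₀ h1t hinv

lemma gaussianPDFReal_mul_exp_quadratic {a : ℝ} (ha : a < 1 / 2) (c x : ℝ) :
    gaussianPDFReal 0 1 x * Real.exp (a * x ^ 2 + c * x) =
      (√(2 * Real.pi))⁻¹ * Real.exp (c ^ 2 / (2 * (1 - 2 * a))) *
        Real.exp (-((1 - 2 * a) / 2) * (x - c / (1 - 2 * a)) ^ 2) := by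
  have ha' : 1 - 2 * a ≠ 0 := by linarith
  simp only [gaussianPDFReal, NNReal.coe_one, mul_one, sub_zero, mul_assoc, ← Real.exp_add]
  congr 2
  field_simp
  ring

lemma integrable_exp_quadratic_gaussianReal {a : ℝ} (ha : a < 1 / 2) (c : ℝ) :
    Integrable (fun x => Real.exp (a * x ^ 2 + c * x)) (gaussianReal 0 1) := by
  rw [gaussianReal_of_var_ne_zero _ one_ne_zero,
    integrable_withDensity_iff_integrable_smul' (measurable_gaussianPDF 0 1)
      (ae_of_all _ fun _ => gaussianPDF_lt_top)]
  simp only [toReal_gaussianPDF, smul_eq_mul, gaussianPDFReal_mul_exp_quadratic ha]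
  exact ((integrable_exp_neg_mul_sq (by linarith)).comp_sub_right _).const_mul _

lemma integral_exp_quadratic_gaussianReal {a : ℝ} (ha : a < 1 / 2) (c : ℝ) :
    ∫ x, Real.exp (a * x ^ 2 + c * x) ∂gaussianReal 0 1 =
      Real.exp (c ^ 2 / (2 * (1 - 2 * a))) / √(1 - 2 * a) := by
  have ha' : 0 < 1 - 2 * a := by linarith
  have hsqrt : √(Real.pi / ((1 - 2 * a) / 2)) = √(2 * Real.pi) / √(1 - 2 * a) := by
    rw [← Real.sqrt_div (by positivity)]
    congr 1
    field_simp
  simp only [integral_gaussianReal_eq_integral_smul one_ne_zero, smul_eq_mul,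
    gaussianPDFReal_mul_exp_quadratic ha]
  rw [integral_const_mul,
    integral_sub_right_eq_self (fun x => Real.exp (-((1 - 2 * a) / 2) * x ^ 2)),
    integral_gaussian, hsqrt]
  field_simp

end GaussianIntegral

section ScalarNoiseExcess

/-- The one-dimensional instance of `noiseExcess`, with `β` an eigenvalue of the matrix. -/
def scalarNoiseExcess (σ β w z : ℝ) : ℝ :=
  2 * (z * (β * z + w)) - 2 * σ ^ 2 * β - (β * z + w) ^ 2 / 2 + σ ^ 2 / 4 * β ^ 2

lemma exp_scalarNoiseExcess_eq (β w z : ℝ) :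
    Real.exp (1 / 64 * scalarNoiseExcess 1 β w z) =
      Real.exp ((β ^ 2 / 4 - 2 * β - w ^ 2 / 2) / 64) *
        Real.exp ((4 * β - β ^ 2) / 128 * z ^ 2 + (2 - β) * w / 64 * z) := by
  rw [← Real.exp_add, scalarNoiseExcess]
  ring_nf

lemma integrable_exp_scalarNoiseExcess (β w : ℝ) :
    Integrable (fun z => Real.exp (1 / 64 * scalarNoiseExcess 1 β w z)) (gaussianReal 0 1) := by
  simp only [exp_scalarNoiseExcess_eq]
  exact (integrable_exp_quadratic_gaussianReal (by nlinarith [sq_nonneg (β - 2)]) _).const_mul _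

lemma integral_exp_scalarNoiseExcess_le_one {β : ℝ} (hβ : |β| ≤ 2) (w : ℝ) :
    ∫ z, Real.exp (1 / 64 * scalarNoiseExcess 1 β w z) ∂gaussianReal 0 1 ≤ 1 := by
  obtain ⟨hβ_ge, hβ_le⟩ := abs_le.1 hβ
  set t : ℝ := (4 * β - β ^ 2) / 64 with ht
  have ht_lt : t < 1 := by nlinarith
  have hpos : 0 < 1 - t := sub_pos.2 ht_lt
  have linear_part : ((2 - β) * w / 64) ^ 2 / (2 * (1 - t)) ≤ w ^ 2 / 128 := by
    have hcoeff : (2 - β) ^ 2 ≤ 64 * (1 - t) := by nlinarith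
    rw [div_le_iff₀ (by positivity)]
    nlinarith [mul_le_mul_of_nonneg_right hcoeff (sq_nonneg w)]
  have quadratic_part : t / (1 - t) ≤ t + β ^ 2 / 128 := by
    have hcoeff : (4 - β) ^ 2 ≤ 32 * (1 - t) := by nlinarith
    rw [div_le_iff₀ hpos]
    nlinarith [mul_le_mul_of_nonneg_right hcoeff (sq_nonneg β)]
  have exp_le_sqrt : Real.exp ((β ^ 2 / 4 - 2 * β - w ^ 2 / 2) / 64 +
      ((2 - β) * w / 64) ^ 2 / (2 * (1 - t))) ≤ √(1 - t) := by
    refine Real.le_sqrt_of_sq_le ((exp_neg_div_one_sub_le ht_lt).trans' ?_)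
    rw [← Real.exp_nat_mul, Real.exp_le_exp]
    push_cast
    linarith
  have ht_half : 2 * ((4 * β - β ^ 2) / 128) = t := by ring
  simp only [exp_scalarNoiseExcess_eq]
  rw [integral_const_mul, integral_exp_quadratic_gaussianReal (by linarith), ht_half,
    ← mul_div_assoc, ← Real.exp_add]
  exact div_le_one_of_le₀ exp_le_sqrt (Real.sqrt_nonneg _)

end ScalarNoiseExcess

section NoiseExcess

variable {ι : Type*} [Fintype ι]

/-- The amount by which the centred noise term `2⟨ξ, d⟩ - 2 σ² tr B` in the comparison of two affine
estimators, whose difference is `d = B ξ + v`, exceeds `‖d‖² / 2 - σ² tr(B²) / 4`. -/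
def noiseExcess (σ : ℝ) (B : Matrix ι ι ℝ) (v ξ : ι → ℝ) : ℝ :=
  2 * (ξ ⬝ᵥ (B *ᵥ ξ + v)) - 2 * σ ^ 2 * B.trace - (B *ᵥ ξ + v) ⬝ᵥ (B *ᵥ ξ + v) / 2
    + σ ^ 2 / 4 * (B * B).trace

lemma measurable_noiseExcess (σ : ℝ) (B : Matrix ι ι ℝ) (v : ι → ℝ) :
    Measurable (noiseExcess σ B v) := by
  unfold noiseExcess
  fun_prop

lemma noiseExcess_smul (σ : ℝ) (B : Matrix ι ι ℝ) (v ξ : ι → ℝ) :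
    noiseExcess σ B (σ • v) (σ • ξ) = σ ^ 2 * noiseExcess 1 B v ξ := by
  simp only [noiseExcess, Matrix.mulVec_smul, ← smul_add, smul_dotProduct, dotProduct_smul,
    smul_eq_mul]
  ring

lemma noiseExcess_zero_zero_nonpos (B : Matrix ι ι ℝ) (v : ι → ℝ) : noiseExcess 0 B v 0 ≤ 0 := by
  have hv : 0 ≤ v ⬝ᵥ v := Fintype.sum_nonneg fun i => mul_self_nonneg (v i)
  simp only [noiseExcess, Matrix.mulVec_zero, zero_add, zero_dotProduct]
  linarith

variable [DecidableEq ι]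

lemma noiseExcess_diagonal (σ : ℝ) (β w ξ : ι → ℝ) :
    noiseExcess σ (Matrix.diagonal β) w ξ = ∑ i, scalarNoiseExcess σ (β i) (w i) (ξ i) := by
  simp only [noiseExcess, scalarNoiseExcess, dotProduct, Matrix.trace, Matrix.diag_apply,
    Matrix.diagonal_mul_diagonal, Matrix.diagonal_apply_eq, Pi.add_apply, Matrix.mulVec_diagonal,
    sum_add_distrib, sum_sub_distrib, mul_sum, sum_div, sq]

lemma noiseExcess_conj_orthogonal (σ : ℝ) {U : Matrix ι ι ℝ} (hU : Uᵀ * U = 1) (B : Matrix ι ι ℝ)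
    (w ξ : ι → ℝ) :
    noiseExcess σ (U * B * Uᵀ) (U *ᵥ w) (U *ᵥ ξ) = noiseExcess σ B w ξ := by
  have trace_conj (C : Matrix ι ι ℝ) : (U * C * Uᵀ).trace = C.trace := by
    rw [Matrix.trace_mul_comm, ← Matrix.mul_assoc, hU, Matrix.one_mul]
  have conj_mul_conj : U * B * Uᵀ * (U * B * Uᵀ) = U * (B * B) * Uᵀ := by
    calc U * B * Uᵀ * (U * B * Uᵀ) = U * B * (Uᵀ * U) * B * Uᵀ := by noncomm_ring
      _ = U * (B * B) * Uᵀ := by rw [hU]; noncomm_ring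
  have conj_mulVec : (U * B * Uᵀ) *ᵥ (U *ᵥ ξ) + U *ᵥ w = U *ᵥ (B *ᵥ ξ + w) := by
    rw [Matrix.mulVec_mulVec, Matrix.mul_assoc, hU, Matrix.mul_one, Matrix.mulVec_add,
      Matrix.mulVec_mulVec]
  have dotProduct_orthogonal (a c : ι → ℝ) : (U *ᵥ a) ⬝ᵥ (U *ᵥ c) = a ⬝ᵥ c := by
    rw [Matrix.dotProduct_mulVec, Matrix.vecMul_mulVec, hU, Matrix.vecMul_one]
  simp only [noiseExcess, conj_mul_conj, trace_conj, conj_mulVec, dotProduct_orthogonal]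

end NoiseExcess

section StandardGaussian

variable {ι : Type*} [Fintype ι]

/-- The law of a family of independent standard Gaussian variables, as a measure on the plain
function space, which is where the noise lives. -/
abbrev stdGaussianPi (ι : Type*) [Fintype ι] : Measure (ι → ℝ) :=
  Measure.pi fun _ => gaussianReal 0 1

lemma integrable_exp_noiseExcess_diagonal [DecidableEq ι] (β w : ι → ℝ) :
    Integrable (fun g => Real.exp (1 / 64 * noiseExcess 1 (Matrix.diagonal β) w g))
      (stdGaussianPi ι) := by
  simp only [noiseExcess_diagonal, mul_sum, Real.exp_sum]
  exact Integrable.fintype_prod fun i => integrable_exp_scalarNoiseExcess (β i) (w i)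

lemma mgf_noiseExcess_diagonal_le_one [DecidableEq ι] {β : ι → ℝ} (hβ : ∀ i, |β i| ≤ 2)
    (w : ι → ℝ) :
    mgf (noiseExcess 1 (Matrix.diagonal β) w) (stdGaussianPi ι) (1 / 64) ≤ 1 := by
  simp only [mgf, noiseExcess_diagonal, mul_sum, Real.exp_sum]
  rw [integral_fintype_prod_eq_prod
    (fun i z => Real.exp (1 / 64 * scalarNoiseExcess 1 (β i) (w i) z))]
  exact prod_le_one (fun i _ => integral_nonneg fun z => (Real.exp_pos _).le)
    fun i _ => integral_exp_scalarNoiseExcess_le_one (hβ i) (w i)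

lemma measurePreserving_mulVec_stdGaussianPi [DecidableEq ι] (U : Matrix.unitaryGroup ι ℝ) :
    MeasurePreserving (fun x => (U : Matrix ι ι ℝ) *ᵥ x) (stdGaussianPi ι) (stdGaussianPi ι) := by
  let L : EuclideanSpace ℝ ι ≃ₗᵢ[ℝ] EuclideanSpace ℝ ι :=
    Unitary.linearIsometryEquiv ⟨Matrix.toEuclideanCLM (n := ι) (𝕜 := ℝ) U, Unitary.map_mem _ U.2⟩
  have toLp_preserving : MeasurePreserving (MeasurableEquiv.toLp 2 (ι → ℝ)) (stdGaussianPi ι)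
      (stdGaussian (EuclideanSpace ℝ ι)) :=
    ⟨MeasurableEquiv.measurable _, map_pi_eq_stdGaussian⟩
  have L_preserving : MeasurePreserving L (stdGaussian (EuclideanSpace ℝ ι))
      (stdGaussian (EuclideanSpace ℝ ι)) :=
    ⟨L.continuous.measurable, stdGaussian_map L⟩
  exact (toLp_preserving.symm _).comp (L_preserving.comp toLp_preserving)

lemma noiseExcess_comp_eigenvectorUnitary [DecidableEq ι] (σ : ℝ) {B : Matrix ι ι ℝ}
    (hB : B.IsHermitian) (v : ι → ℝ) :
    noiseExcess σ B v ∘ (fun x => (hB.eigenvectorUnitary : Matrix ι ι ℝ) *ᵥ x) =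
      noiseExcess σ (Matrix.diagonal hB.eigenvalues)
        ((hB.eigenvectorUnitary : Matrix ι ι ℝ)ᵀ *ᵥ v) := by
  set U : Matrix ι ι ℝ := ↑hB.eigenvectorUnitary
  have hUU : Uᵀ * U = 1 := Unitary.star_mul_self_of_mem hB.eigenvectorUnitary.2
  have hUU' : U * Uᵀ = 1 := Unitary.mul_star_self_of_mem hB.eigenvectorUnitary.2
  have hBU : B = U * Matrix.diagonal hB.eigenvalues * Uᵀ := hB.spectral_theorem
  funext x
  have hv : v = U *ᵥ (Uᵀ *ᵥ v) := by rw [Matrix.mulVec_mulVec, hUU', Matrix.one_mulVec]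
  rw [← noiseExcess_conj_orthogonal σ hUU, ← hv, ← hBU, Function.comp_apply]

variable {B : Matrix ι ι ℝ}

lemma integrable_exp_noiseExcess (hB : B.IsHermitian) (v : ι → ℝ) :
    Integrable (fun g => Real.exp (1 / 64 * noiseExcess 1 B v g)) (stdGaussianPi ι) := by
  classical
  have hU := measurePreserving_mulVec_stdGaussianPi hB.eigenvectorUnitary
  have hmeas := ((measurable_noiseExcess 1 B v).const_mul (1 / 64)).exp
  rw [← hU.integrable_comp hmeas.aestronglyMeasurable]
  have := integrable_exp_noiseExcess_diagonal hB.eigenvalues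
      ((hB.eigenvectorUnitary : Matrix ι ι ℝ)ᵀ *ᵥ v)
  rwa [← noiseExcess_comp_eigenvectorUnitary 1 hB v] at this

variable [DecidableEq ι]

lemma mgf_noiseExcess_le_one (hB : B.IsHermitian) (hβ : ∀ i, |hB.eigenvalues i| ≤ 2) (v : ι → ℝ) :
    mgf (noiseExcess 1 B v) (stdGaussianPi ι) (1 / 64) ≤ 1 := by
  have hU := measurePreserving_mulVec_stdGaussianPi hB.eigenvectorUnitary
  have hmeas := ((measurable_noiseExcess 1 B v).const_mul (1 / 64)).exp
  rw [← hU.map_eq, mgf_map hU.aemeasurable hmeas.aestronglyMeasurable,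
    noiseExcess_comp_eigenvectorUnitary 1 hB v]
  exact mgf_noiseExcess_diagonal_le_one hβ _

lemma measureReal_stdGaussianPi_noiseExcess_ge_le (hB : B.IsHermitian)
    (hβ : ∀ i, |hB.eigenvalues i| ≤ 2) (v : ι → ℝ) (s : ℝ) :
    (stdGaussianPi ι).real {g | 64 * s ≤ noiseExcess 1 B v g} ≤ Real.exp (-s) := by
  calc (stdGaussianPi ι).real {g | 64 * s ≤ noiseExcess 1 B v g}
      ≤ Real.exp (-(1 / 64) * (64 * s)) * mgf (noiseExcess 1 B v) (stdGaussianPi ι) (1 / 64) :=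
        measure_ge_le_exp_mul_mgf _ (by norm_num) (integrable_exp_noiseExcess hB v)
    _ ≤ Real.exp (-(1 / 64) * (64 * s)) * 1 := by gcongr; exact mgf_noiseExcess_le_one hB hβ v
    _ = Real.exp (-s) := by rw [mul_one]; ring_nf

end StandardGaussian

section ScaledGaussian

variable {n : ℕ}

lemma gaussPi_eq_map_smul (n : ℕ) (σ : ℝ) :
    gaussPi n σ = (stdGaussianPi (Fin n)).map (σ • ·) := by
  have hcoord : (gaussianReal 0 1).map (σ * ·) = gaussianReal 0 ⟨σ ^ 2, sq_nonneg σ⟩ := by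
    rw [gaussianReal_map_const_mul, mul_zero, mul_one]
    rfl
  have hpi := Measure.pi_map_pi (μ := fun _ : Fin n => gaussianReal 0 1) (f := fun _ => (σ * ·))
    (by fun_prop)
  simp only [hcoord] at hpi
  exact hpi.symm

lemma measureReal_gaussPi_noiseExcess_gt_le (σ : ℝ) {B : Matrix (Fin n) (Fin n) ℝ}
    (hB : B.IsHermitian) (hβ : ∀ i, |hB.eigenvalues i| ≤ 2) (v : Fin n → ℝ) (s : ℝ) :
    (gaussPi n σ).real {ξ | 64 * σ ^ 2 * s < noiseExcess σ B v ξ} ≤ Real.exp (-s) := by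
  rw [gaussPi_eq_map_smul, map_measureReal_apply (by fun_prop)
    (measurableSet_lt measurable_const (measurable_noiseExcess σ B v))]
  rcases eq_or_ne σ 0 with rfl | hσ
  · have hempty : ((0 : ℝ) • · : (Fin n → ℝ) → Fin n → ℝ) ⁻¹'
        {ξ | 64 * 0 ^ 2 * s < noiseExcess 0 B v ξ} = ∅ := by
      refine Set.eq_empty_of_forall_notMem fun g hg => ?_
      rw [Set.mem_preimage, Set.mem_ofPred_eq, zero_smul] at hg
      linarith [noiseExcess_zero_zero_nonpos B v]
    rw [hempty, measureReal_empty]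
    exact (Real.exp_pos _).le
  · refine (measureReal_mono fun g hg => ?_).trans
      (measureReal_stdGaussianPi_noiseExcess_ge_le hB hβ (σ⁻¹ • v) s)
    have hv : σ • σ⁻¹ • v = v := smul_inv_smul₀ hσ v
    have hσ2 : 0 < σ ^ 2 := by positivity
    rw [Set.mem_preimage, Set.mem_ofPred_eq, ← hv, noiseExcess_smul] at hg
    exact (lt_of_mul_lt_mul_left (by linarith) hσ2.le).le

end ScaledGaussian

section StarProjection

variable {ι : Type*} [Fintype ι] {A C : Matrix ι ι ℝ}

lemma posSemidef_of_isStarProjection (hA : IsStarProjection A) : A.PosSemidef := by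
  have h := Matrix.posSemidef_conjTranspose_mul_self A
  rwa [← Matrix.star_eq_conjTranspose, hA.isSelfAdjoint.star_eq, hA.isIdempotentElem.eq] at h

lemma isHermitian_sub_of_isStarProjection (hA : IsStarProjection A) (hC : IsStarProjection C) :
    (A - C).IsHermitian :=
  hA.isSelfAdjoint.sub hC.isSelfAdjoint

lemma dotProduct_mulVec_mem_Icc (hA : IsStarProjection A) (u : ι → ℝ) :
    u ⬝ᵥ (A *ᵥ u) ∈ Set.Icc 0 (u ⬝ᵥ u) := by
  classical
  have hnonneg := (posSemidef_of_isStarProjection hA).dotProduct_mulVec_nonneg u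
  have hcompl := (posSemidef_of_isStarProjection hA.one_sub).dotProduct_mulVec_nonneg u
  rw [Matrix.sub_mulVec, Matrix.one_mulVec, dotProduct_sub, sub_nonneg] at hcompl
  exact ⟨hnonneg, hcompl⟩

lemma abs_eigenvalues_sub_le_one [DecidableEq ι] (hA : IsStarProjection A)
    (hC : IsStarProjection C) (hB : (A - C).IsHermitian) (i : ι) : |hB.eigenvalues i| ≤ 1 := by
  set u : ι → ℝ := (hB.eigenvectorBasis i).ofLp
  have hu : u ⬝ᵥ u = 1 := by
    have hinner := inner_self_eq_one_of_norm_eq_one (𝕜 := ℝ) (hB.eigenvectorBasis.norm_eq_one i)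
    rwa [EuclideanSpace.inner_eq_star_dotProduct, star_trivial] at hinner
  have heig : hB.eigenvalues i = u ⬝ᵥ (A *ᵥ u) - u ⬝ᵥ (C *ᵥ u) := by
    rw [← dotProduct_sub, ← Matrix.sub_mulVec]
    exact hB.eigenvalues_eq i
  obtain ⟨hA_nonneg, hA_le⟩ := dotProduct_mulVec_mem_Icc hA u
  obtain ⟨hC_nonneg, hC_le⟩ := dotProduct_mulVec_mem_Icc hC u
  rw [heig, abs_le]
  constructor <;> linarith

lemma trace_mul_le_trace_right (hA : IsStarProjection A) (hC : IsStarProjection C) :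
    (A * C).trace ≤ C.trace := by
  classical
  have hcompl := hA.one_sub
  have hstar : ((1 - A) * C)ᴴ * ((1 - A) * C) = C * ((1 - A) * C) := by
    rw [← Matrix.star_eq_conjTranspose, star_mul, hC.isSelfAdjoint.star_eq,
      hcompl.isSelfAdjoint.star_eq, mul_assoc, ← mul_assoc (1 - A) (1 - A),
      hcompl.isIdempotentElem.eq]
  have hnonneg := (Matrix.posSemidef_conjTranspose_mul_self ((1 - A) * C)).trace_nonneg
  rw [hstar, Matrix.trace_mul_comm, mul_assoc, hC.isIdempotentElem.eq, sub_mul, one_mul,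
    Matrix.trace_sub, sub_nonneg] at hnonneg
  exact hnonneg

lemma abs_trace_sub_le_trace_sub_mul_sub (hA : IsStarProjection A) (hC : IsStarProjection C) :
    |(A - C).trace| ≤ ((A - C) * (A - C)).trace := by
  have hsq : ((A - C) * (A - C)).trace = A.trace + C.trace - 2 * (A * C).trace := by
    rw [sub_mul, mul_sub, mul_sub, hA.isIdempotentElem.eq, hC.isIdempotentElem.eq]
    simp only [Matrix.trace_sub, Matrix.trace_mul_comm C A]
    ring
  have hleC := trace_mul_le_trace_right hA hC
  have hleA := trace_mul_le_trace_right hC hA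
  rw [Matrix.trace_mul_comm] at hleA
  rw [hsq, Matrix.trace_sub, abs_le]
  constructor <;> linarith

end StarProjection

section SqNorm

variable {n : ℕ}

lemma sqNorm_eq_dotProduct (u : Fin n → ℝ) : sqNorm u = u ⬝ᵥ u := by
  simp only [sqNorm, dotProduct, sq]

lemma sqNorm_sub (u v : Fin n → ℝ) : sqNorm (u - v) = sqNorm u - 2 * (u ⬝ᵥ v) + sqNorm v := by
  simp only [sqNorm_eq_dotProduct, sub_dotProduct, dotProduct_sub, dotProduct_comm v u]
  ring

lemma sqNorm_segment (u v : Fin n → ℝ) (t : ℝ) :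
    sqNorm ((1 - t) • u + t • v) =
      (1 - t) * sqNorm u + t * sqNorm v - t * (1 - t) * sqNorm (u - v) := by
  rw [sqNorm_sub]
  simp only [sqNorm_eq_dotProduct, add_dotProduct, dotProduct_add, smul_dotProduct,
    dotProduct_smul, smul_eq_mul, dotProduct_comm v u]
  ring

end SqNorm

section Criterion

variable {n M : ℕ} {A : Fin M → Matrix (Fin n) (Fin n) ℝ} {b : Fin M → Fin n → ℝ}
  {y : Fin n → ℝ} {θ θ' : Fin M → ℝ} {s : ℝ}

lemma muV_segment (t : ℝ) :
    muV A b y ((1 - t) • θ + t • θ') = (1 - t) • muV A b y θ + t • muV A b y θ' := by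
  simp only [muV, Pi.add_apply, Pi.smul_apply, smul_eq_mul, add_smul, mul_smul, sum_add_distrib,
    smul_sum]

lemma muV_single (j : Fin M) : muV A b y (Pi.single j 1) = A j *ᵥ y + b j := by
  simp only [muV, Pi.single_apply, ite_smul, one_smul, zero_smul, sum_ite_eq', mem_univ, if_true]

lemma dotProduct_muV (u : Fin n → ℝ) :
    u ⬝ᵥ muV A b y θ = ∑ k, θ k * (u ⬝ᵥ (A k *ᵥ y + b k)) := by
  simp only [muV, dotProduct_sum, dotProduct_smul, smul_eq_mul]

lemma sum_mul_sqNorm_sub_eq_pen_add (hθ : θ ∈ simplex M) (v : Fin n → ℝ) :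
    ∑ k, θ k * sqNorm (A k *ᵥ y + b k - v) = pen A b y θ + sqNorm (muV A b y θ - v) := by
  have hexpand (w : Fin n → ℝ) : ∑ k, θ k * sqNorm (A k *ᵥ y + b k - w) =
      ∑ k, θ k * sqNorm (A k *ᵥ y + b k) - 2 * (w ⬝ᵥ muV A b y θ) + sqNorm w := by
    rw [dotProduct_muV]
    simp only [sqNorm_sub, mul_add, mul_sub, sum_add_distrib, sum_sub_distrib, ← sum_mul, hθ.2,
      one_mul, mul_sum, dotProduct_comm w, mul_left_comm]
  have hpen : pen A b y θ = ∑ k, θ k * sqNorm (A k *ᵥ y + b k - muV A b y θ) := by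
    simp only [pen, sqNorm_sub, dotProduct_comm (muV A b y θ)]
    congr! 2
    ring
  rw [hpen, hexpand, hexpand, sqNorm_sub, dotProduct_comm v, sqNorm_eq_dotProduct (muV A b y θ)]
  ring

lemma Wfun_eq_of_mem_simplex (hθ : θ ∈ simplex M) :
    Wfun A b s y θ = sqNorm (muV A b y θ) / 2 +
      ∑ k, θ k * (sqNorm (A k *ᵥ y + b k) / 2 - 2 * (y ⬝ᵥ (A k *ᵥ y + b k)) +
        2 * s * (A k).trace) := by
  have hpen := sum_mul_sqNorm_sub_eq_pen_add (A := A) (b := b) (y := y) hθ 0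
  have hdot : ∑ i, y i * muV A b y θ i = ∑ k, θ k * (y ⬝ᵥ (A k *ᵥ y + b k)) := dotProduct_muV y
  simp only [sub_zero] at hpen
  have hsum : ∑ k, θ k * (sqNorm (A k *ᵥ y + b k) / 2 - 2 * (y ⬝ᵥ (A k *ᵥ y + b k)) +
      2 * s * (A k).trace) = (∑ k, θ k * sqNorm (A k *ᵥ y + b k)) / 2 -
      2 * ∑ k, θ k * (y ⬝ᵥ (A k *ᵥ y + b k)) + 2 * s * ∑ k, θ k * (A k).trace := by
    simp only [mul_sum, sum_div, ← sum_sub_distrib, ← sum_add_distrib]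
    exact sum_congr rfl fun k _ => by ring
  rw [hsum, hpen, Wfun, hdot]
  ring

lemma Wfun_single (j : Fin M) :
    Wfun A b s y (Pi.single j 1) = sqNorm (A j *ᵥ y + b j) - 2 * (y ⬝ᵥ (A j *ᵥ y + b j)) +
      2 * s * (A j).trace := by
  rw [Wfun_eq_of_mem_simplex (single_mem_stdSimplex ℝ j), muV_single]
  simp only [Pi.single_apply, ite_mul, one_mul, zero_mul, sum_ite_eq', mem_univ, if_true]
  ring

lemma Wfun_segment (hθ : θ ∈ simplex M) (hθ' : θ' ∈ simplex M) {t : ℝ} (ht : t ∈ Set.Icc 0 1) :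
    Wfun A b s y ((1 - t) • θ + t • θ') = (1 - t) * Wfun A b s y θ + t * Wfun A b s y θ' -
      t * (1 - t) * (sqNorm (muV A b y θ - muV A b y θ') / 2) := by
  have hmem : (1 - t) • θ + t • θ' ∈ simplex M :=
    convex_stdSimplex ℝ (Fin M) hθ hθ' (sub_nonneg.2 ht.2) ht.1 (by ring)
  rw [Wfun_eq_of_mem_simplex hθ, Wfun_eq_of_mem_simplex hθ', Wfun_eq_of_mem_simplex hmem,
    muV_segment, sqNorm_segment]
  simp only [Pi.add_apply, Pi.smul_apply, smul_eq_mul, add_mul, sum_add_distrib, mul_assoc,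
    ← mul_sum]
  ring

lemma Wfun_add_half_sqNorm_le (hθ : θ ∈ simplex M)
    (hmin : IsMinOn (Wfun A b s y) (simplex M) θ) (hθ' : θ' ∈ simplex M) :
    Wfun A b s y θ + sqNorm (muV A b y θ - muV A b y θ') / 2 ≤ Wfun A b s y θ' := by
  set D : ℝ := sqNorm (muV A b y θ - muV A b y θ') / 2 with hD
  have hslope : ∀ t ∈ Set.Ioo (0 : ℝ) 1, Wfun A b s y θ + (1 - t) * D ≤ Wfun A b s y θ' := by
    intro t ht
    have hle := hmin (convex_stdSimplex ℝ (Fin M) hθ hθ' (sub_nonneg.2 ht.2.le) ht.1.le (by ring))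
    rw [Set.mem_ofPred_eq, Wfun_segment hθ hθ' ⟨ht.1.le, ht.2.le⟩, ← hD] at hle
    exact le_of_mul_le_mul_left (by linarith) ht.1
  have hlim : Filter.Tendsto (fun t => Wfun A b s y θ + (1 - t) * D) (nhdsWithin 0 (Set.Ioi 0))
      (nhds (Wfun A b s y θ + D)) := by
    exact (Continuous.tendsto' (by fun_prop) 0 _ (by ring)).mono_left nhdsWithin_le_nhds
  exact le_of_tendsto hlim (Filter.eventually_of_mem (Ioo_mem_nhdsGT one_pos) hslope)

end Criterion

section OracleInequality

variable {n M : ℕ} {A : Fin M → Matrix (Fin n) (Fin n) ℝ} {b : Fin M → Fin n → ℝ}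
  {f ξ : Fin n → ℝ} {θ : Fin M → ℝ} {s : ℝ}

lemma sqNorm_muV_sub_le_add_sum (hθ : θ ∈ simplex M)
    (hmin : IsMinOn (Wfun A b s (f + ξ)) (simplex M) θ) (j : Fin M) :
    sqNorm (muV A b (f + ξ) θ - f) ≤ sqNorm (A j *ᵥ (f + ξ) + b j - f) +
      ∑ k, θ k * (2 * (ξ ⬝ᵥ ((A k *ᵥ (f + ξ) + b k) - (A j *ᵥ (f + ξ) + b j))) -
        2 * s * (A k - A j).trace -
        sqNorm ((A k *ᵥ (f + ξ) + b k) - (A j *ᵥ (f + ξ) + b j)) / 2) := by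
  set y : Fin n → ℝ := f + ξ
  set m : Fin n → ℝ := A j *ᵥ y + b j
  have hoptimal := Wfun_add_half_sqNorm_le hθ hmin (single_mem_stdSimplex ℝ j)
  have hpen := sum_mul_sqNorm_sub_eq_pen_add (A := A) (b := b) (y := y) hθ m
  have hdot : y ⬝ᵥ muV A b y θ = f ⬝ᵥ muV A b y θ + ξ ⬝ᵥ muV A b y θ := add_dotProduct _ _ _
  have hdot' : y ⬝ᵥ m = f ⬝ᵥ m + ξ ⬝ᵥ m := add_dotProduct _ _ _
  have hsum : ∑ k, θ k * (2 * (ξ ⬝ᵥ (A k *ᵥ y + b k - m)) - 2 * s * (A k - A j).trace -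
      sqNorm (A k *ᵥ y + b k - m) / 2) =
      2 * (ξ ⬝ᵥ muV A b y θ - ξ ⬝ᵥ m) - 2 * s * (∑ k, θ k * (A k).trace - (A j).trace) -
        (∑ k, θ k * sqNorm (A k *ᵥ y + b k - m)) / 2 := by
    simp only [dotProduct_muV, dotProduct_sub, Matrix.trace_sub, mul_sub, sum_sub_distrib,
      ← sum_mul, hθ.2, one_mul, mul_sum, sum_div, mul_left_comm, mul_div_assoc]
  rw [Wfun_single, muV_single, Wfun] at hoptimal
  change sqNorm (muV A b y θ) - 2 * (y ⬝ᵥ muV A b y θ) + _ + _ + _ ≤ _ at hoptimal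
  rw [hsum, hpen, sqNorm_sub _ f, sqNorm_sub _ f, dotProduct_comm _ f, dotProduct_comm _ f]
  linarith

lemma comparison_le_noiseExcess {σ : ℝ} (hs : |σ ^ 2 - s| ≤ σ ^ 2 / 8) {k j : Fin M}
    (hk : IsStarProjection (A k)) (hj : IsStarProjection (A j)) :
    2 * (ξ ⬝ᵥ ((A k *ᵥ (f + ξ) + b k) - (A j *ᵥ (f + ξ) + b j))) - 2 * s * (A k - A j).trace -
        sqNorm ((A k *ᵥ (f + ξ) + b k) - (A j *ᵥ (f + ξ) + b j)) / 2 ≤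
      noiseExcess σ (A k - A j) ((A k - A j) *ᵥ f + (b k - b j)) ξ := by
  have hdiff : (A k *ᵥ (f + ξ) + b k) - (A j *ᵥ (f + ξ) + b j) =
      (A k - A j) *ᵥ ξ + ((A k - A j) *ᵥ f + (b k - b j)) := by
    simp only [Matrix.sub_mulVec, Matrix.mulVec_add]
    abel
  have hvariance : (σ ^ 2 - s) * (A k - A j).trace ≤
      σ ^ 2 / 8 * ((A k - A j) * (A k - A j)).trace :=
    calc (σ ^ 2 - s) * (A k - A j).trace ≤ |σ ^ 2 - s| * |(A k - A j).trace| := by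
          rw [← abs_mul]; exact le_abs_self _
      _ ≤ σ ^ 2 / 8 * ((A k - A j) * (A k - A j)).trace := by
          gcongr; exact abs_trace_sub_le_trace_sub_mul_sub hk hj
  rw [hdiff, noiseExcess, sqNorm_eq_dotProduct]
  linarith

lemma sqNorm_muV_sub_le_add (hA : ∀ k, IsStarProjection (A k)) {σ : ℝ}
    (hs : |σ ^ 2 - s| ≤ σ ^ 2 / 8) (hθ : θ ∈ simplex M)
    (hmin : IsMinOn (Wfun A b s (f + ξ)) (simplex M) θ) (j : Fin M) {T : ℝ}
    (hT : ∀ k, noiseExcess σ (A k - A j) ((A k - A j) *ᵥ f + (b k - b j)) ξ ≤ T) :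
    sqNorm (muV A b (f + ξ) θ - f) ≤ sqNorm (A j *ᵥ (f + ξ) + b j - f) + T := by
  have hsum_T : ∑ k, θ k * T = T := by rw [← sum_mul, hθ.2, one_mul]
  refine (sqNorm_muV_sub_le_add_sum hθ hmin j).trans ?_
  rw [← hsum_T]
  gcongr with k
  · exact hθ.1 k
  · exact (comparison_le_noiseExcess hs (hA k) (hA j)).trans (hT k)

end OracleInequality

section UnionBound

lemma measureReal_iUnion_le_exp_neg {Ω κ : Type*} [MeasurableSpace Ω] [Fintype κ] {μ : Measure Ω}
    {E : κ → Set Ω} {x : ℝ} (hE : ∀ p, μ.real (E p) ≤ Real.exp (-(x + Real.log (Fintype.card κ)))) :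
    μ.real (⋃ p, E p) ≤ Real.exp (-x) := by
  cases isEmpty_or_nonempty κ
  · simpa only [Set.iUnion_of_empty, measureReal_empty] using (Real.exp_pos (-x)).le
  have hcard : (0 : ℝ) < Fintype.card κ := Nat.cast_pos.2 Fintype.card_pos
  calc μ.real (⋃ p, E p) ≤ ∑ p, μ.real (E p) := measureReal_iUnion_fintype_le E
    _ ≤ Fintype.card κ • Real.exp (-(x + Real.log (Fintype.card κ))) :=
        sum_le_card_nsmul _ _ _ fun p _ => hE p
    _ = Real.exp (-x) := by
        rw [nsmul_eq_mul, neg_add, Real.exp_add, Real.exp_neg (Real.log _), Real.exp_log hcard]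
        field_simp

variable {n M : ℕ} {A : Fin M → Matrix (Fin n) (Fin n) ℝ}

lemma measureReal_gaussPi_exists_noiseExcess_gt_le (σ : ℝ) (hA : ∀ j, IsStarProjection (A j))
    (v : Fin M × Fin M → Fin n → ℝ) (x : ℝ) :
    (gaussPi n σ).real (⋃ p, {ξ | 64 * σ ^ 2 * (x + 2 * Real.log M) <
      noiseExcess σ (A p.1 - A p.2) (v p) ξ}) ≤ Real.exp (-x) := by
  have hcard : Real.log (Fintype.card (Fin M × Fin M)) = 2 * Real.log M := by
    rw [Fintype.card_prod, Fintype.card_fin, ← sq, Nat.cast_pow, Real.log_pow, Nat.cast_ofNat]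
  refine measureReal_iUnion_le_exp_neg fun p => ?_
  rw [hcard]
  exact measureReal_gaussPi_noiseExcess_gt_le σ (isHermitian_sub_of_isStarProjection (hA _) (hA _))
    (fun i => (abs_eigenvalues_sub_le_one (hA _) (hA _) _ i).trans one_le_two) (v p) _

end UnionBound

theorem aggregation_variance_misspecification_general
    {n M : ℕ} (σ : ℝ) (f : Fin n → ℝ)
    (A : Fin M → Matrix (Fin n) (Fin n) ℝ) (b : Fin M → Fin n → ℝ)
    (hA : ∀ j, IsStarProjection (A j))
    {Ω : Type*} [MeasurableSpace Ω] (P : Measure Ω) [IsProbabilityMeasure P]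
    (ξ : Ω → Fin n → ℝ) (hξ : HasLaw ξ (gaussPi n σ) P) (σ2hat : Ω → ℝ)
    (θhat : Ω → Fin M → ℝ) (hθmem : ∀ ω, θhat ω ∈ simplex M)
    (hθmin : ∀ ω, IsMinOn (Wfun A b (σ2hat ω) (f + ξ ω)) (simplex M) (θhat ω)) (x : ℝ) :
    1 - P.real {ω | σ ^ 2 / 8 < |σ ^ 2 - σ2hat ω|} - Real.exp (-x) ≤
      P.real {ω | ∀ j, sqNorm (muV A b (f + ξ ω) (θhat ω) - f) ≤
        sqNorm (A j *ᵥ (f + ξ ω) + b j - f) + 64 * σ ^ 2 * (x + 2 * Real.log M)} := by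
  set misspecified : Set Ω := {ω | σ ^ 2 / 8 < |σ ^ 2 - σ2hat ω|}
  set oracle : Set Ω := {ω | ∀ j, sqNorm (muV A b (f + ξ ω) (θhat ω) - f) ≤
    sqNorm (A j *ᵥ (f + ξ ω) + b j - f) + 64 * σ ^ 2 * (x + 2 * Real.log M)}
  let v (p : Fin M × Fin M) : Fin n → ℝ := (A p.1 - A p.2) *ᵥ f + (b p.1 - b p.2)
  let noisy : Set (Fin n → ℝ) := ⋃ p : Fin M × Fin M,
    {z | 64 * σ ^ 2 * (x + 2 * Real.log M) < noiseExcess σ (A p.1 - A p.2) (v p) z}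
  have hnoisy_meas : MeasurableSet noisy := .iUnion fun p =>
    measurableSet_lt measurable_const (measurable_noiseExcess σ _ (v p))
  have hnoisy : P.real (ξ ⁻¹' noisy) ≤ Real.exp (-x) := by
    rw [← map_measureReal_apply_of_aemeasurable hξ.aemeasurable hnoisy_meas, hξ.map_eq]
    exact measureReal_gaussPi_exists_noiseExcess_gt_le σ hA v x
  have hcover : Set.univ ⊆ oracle ∪ (misspecified ∪ ξ ⁻¹' noisy) := by
    intro ω _
    by_contra! hω
    simp only [Set.mem_union, not_or] at hω
    obtain ⟨hbad, hs, hquiet⟩ := hω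
    refine hbad fun j => sqNorm_muV_sub_le_add hA (not_lt.1 hs) (hθmem ω) (hθmin ω) j fun k => ?_
    exact not_lt.1 fun hk => hquiet (Set.mem_iUnion.2 ⟨(k, j), hk⟩)
  have htotal := (measureReal_mono (μ := P) hcover).trans (measureReal_union_le _ _)
  have hunion := measureReal_union_le (μ := P) misspecified (ξ ⁻¹' noisy)
  rw [probReal_univ] at htotal
  linarith

/-- **Theorem 6.2**: aggregation of least squares estimators under variance
misspecification. -/
theorem aggregation_variance_misspecification
    {n M : ℕ} (hM : 2 ≤ M) (σ : ℝ) (f : Fin n → ℝ)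
    (A : Fin M → Matrix (Fin n) (Fin n) ℝ) (b : Fin M → Fin n → ℝ)
    (hproj : ∀ j, Matrix.transpose (A j) = A j ∧ A j * A j = A j)
    {Ω : Type} [MeasurableSpace Ω] (P : Measure Ω) [IsProbabilityMeasure P]
    (ξ : Ω → Fin n → ℝ) (hξ : Measurable ξ) (hlaw : P.map ξ = gaussPi n σ)
    (σ2hat : Ω → ℝ) (hσ2hatmeas : Measurable σ2hat)
    (δ : ℝ) (hδdef : δ = (P {ω | σ ^ 2 / 8 < |σ ^ 2 - σ2hat ω|}).toReal)
    (hδ : δ < 1)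
    (θhat : Ω → Fin M → ℝ)
    (hθmem : ∀ ω, θhat ω ∈ simplex M)
    (hθmin : ∀ ω, ∀ θ ∈ simplex M,
      Wfun A b (σ2hat ω) (f + ξ ω) (θhat ω) ≤ Wfun A b (σ2hat ω) (f + ξ ω) θ) :
    ∀ x : ℝ, 0 < x →
      ENNReal.ofReal (1 - δ - 2 * Real.exp (-x)) ≤
        P {ω | ∀ j, sqNorm (muV A b (f + ξ ω) (θhat ω) - f) ≤
            sqNorm ((A j).mulVec (f + ξ ω) + b j - f)
              + 64 * σ ^ 2 * (x + 2 * Real.log M)} := by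
  intro x _
  have hA (j) : IsStarProjection (A j) := ⟨(hproj j).2, (hproj j).1⟩
  have hbound := aggregation_variance_misspecification_general σ f A b hA P ξ
    ⟨hξ.aemeasurable, hlaw⟩ σ2hat θhat hθmem hθmin x
  refine ENNReal.ofReal_le_of_le_toReal (hbound.trans' ?_)
  rw [hδdef, ← measureReal_def]
  linarith [Real.exp_pos (-x)]

end
end

section
/- Let M, n ≥ 1 with M ≤ √n(exp(n) − 1), and let μ̂_j = A_j y + b_j (j = 1,…,M), with noise ξ ~ N(0, σ² I_n). Assume that for some R > 0: (1/n)‖f‖² ≤ R², (1/n)‖b_j‖² ≤ R² and ‖A_j‖_op ≤ 1 for all j. Set m = ⌊√(n / log(1 + M/√n))⌋ and let Λ^M_m = { (1/m)Σ_{q=1}^m u_q : u_1,…,u_m ∈ {e_1,…,e_M} }. Let μ̂_{Λ^M_m} be the estimator obtained by applying the penalized procedure minimizing H_pen to the finite family of affine estimators (μ̂_u)_{u ∈ Λ^M_m}. Then there exists an absolute constant C > 0 such that for every x > 0, with probability at least 1 − 3exp(−x), (1/n)‖μ̂_{Λ^M_m} − f‖² ≤ min_{θ∈Λ^M} (1/n)‖μ̂_θ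 − f‖² + C max(R², σ²)√(log(1 + M/√n)/n) + Cσ²x/n. -/
open MeasureTheory ProbabilityTheory Finset

noncomputable section

/-- The point of the grid `Λ^M_m` associated with a tuple `(u_1,…,u_m)` of vertices:
`(1/m) ∑_q e_{u_q}`. -/
def gridPoint (M m : ℕ) (u : Fin m → Fin M) : Fin M → ℝ :=
  fun j => (∑ q, if u q = j then (1 : ℝ) else 0) / m

/-- The aggregate `ν_λ` of the family `(μ̂_{gridPoint u})_u` with weights `λ`. -/
def nuGrid {n M m : ℕ} (A : Fin M → Matrix (Fin n) (Fin n) ℝ) (b : Fin M → Fin n → ℝ)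
    (y : Fin n → ℝ) (lam : (Fin m → Fin M) → ℝ) : Fin n → ℝ :=
  ∑ u, lam u • muV A b y (gridPoint M m u)

/-- The penalized criterion `H_pen` for the family `(μ̂_u)_{u ∈ Λ^M_m}`. -/
def HpenGrid {n M m : ℕ} (A : Fin M → Matrix (Fin n) (Fin n) ℝ) (b : Fin M → Fin n → ℝ)
    (σ : ℝ) (y : Fin n → ℝ) (lam : (Fin m → Fin M) → ℝ) : ℝ :=
  sqNorm (nuGrid A b y lam) - 2 * ∑ i, y i * nuGrid A b y lam i
    + 2 * σ ^ 2 * ∑ u, lam u * ∑ j, gridPoint M m u j * (A j).trace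
    + (1 / 2) * ∑ u, lam u * sqNorm (nuGrid A b y lam - muV A b y (gridPoint M m u))

/-- The simplex of weights indexed by the tuples `Fin m → Fin M`. -/
def simplexGrid (M m : ℕ) : Set ((Fin m → Fin M) → ℝ) :=
  {lam | (∀ u, 0 ≤ lam u) ∧ ∑ u, lam u = 1}

/-!
With the penalty, the criterion is `‖ν_λ‖² / 2` plus a linear function of the weights, hence
strongly convex in `ν_λ`: comparing its minimizer with an estimator `ν k` of the family costs at
most a weighted mean of chaoses `2⟪ξ, ν i - ν k⟫ - (c i - c k) - ‖ν i - ν k‖² / 2`, where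
`c i = 2σ² tr A i`. The last term absorbs the variance of the Gaussian chaos, so that its
exponential moment at a scale of order `σ²` is bounded, and a union bound over pairs of grid points
costs `σ² log #grid`. By Maurey's empirical argument, the `m`-fold averages of the vertices of the
simplex approximate any convex combination up to an error of order `1 / m` in squared norm. The
choice of `m` balances this error against the entropy of the grid.
-/

open scoped RealInnerProductSpace

section WeightedMeans

variable {ι E : Type*} [Fintype ι] [NormedAddCommGroup E] [InnerProductSpace ℝ E]

/-- The variance of the points `v i` under the weights `w i` (of total mass one). The penalty of
the aggregation procedure is the dispersion of the estimators under the aggregation weights. -/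
def dispersion (w : ι → ℝ) (v : ι → E) : ℝ :=
  ∑ i, w i * ‖v i - ∑ j, w j • v j‖ ^ 2

lemma sum_mul_norm_sub_sq {w : ι → ℝ} (hw : ∑ i, w i = 1) (v : ι → E) (c : E) :
    ∑ i, w i * ‖v i - c‖ ^ 2 = ‖∑ i, w i • v i - c‖ ^ 2 + dispersion w v := by
  set mean := ∑ i, w i • v i with hmean
  have hsplit (i : ι) : w i * ‖v i - c‖ ^ 2 =
      w i * ‖v i - mean‖ ^ 2 + 2 * ⟪w i • v i - w i • mean, mean - c⟫ +
        w i * ‖mean - c‖ ^ 2 := by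
    rw [← sub_add_sub_cancel (v i) mean c, norm_add_sq_real, ← smul_sub, real_inner_smul_left]
    ring
  have hcentred : ∑ i, (w i • v i - w i • mean) = 0 := by
    rw [sum_sub_distrib, ← sum_smul, hw, one_smul, ← hmean, sub_self]
  simp_rw [hsplit, sum_add_distrib, ← mul_sum, ← sum_inner, hcentred, ← sum_mul, hw, dispersion]
  simp only [inner_zero_left, ← hmean]
  ring

lemma dispersion_eq {w : ι → ℝ} (hw : ∑ i, w i = 1) (v : ι → E) :
    dispersion w v = ∑ i, w i * ‖v i‖ ^ 2 - ‖∑ i, w i • v i‖ ^ 2 := by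
  have h := sum_mul_norm_sub_sq hw v 0
  simp only [sub_zero] at h
  linarith

lemma dispersion_le {w : ι → ℝ} (hw : w ∈ stdSimplex ℝ ι) {v : ι → E} {W : ℝ}
    (hv : ∀ i, ‖v i‖ ^ 2 ≤ W) : dispersion w v ≤ W := by
  have hmean : ∑ i, w i * ‖v i‖ ^ 2 ≤ W :=
    (convex_Iic W).sum_mem (fun i _ => hw.1 i) hw.2 fun i _ => hv i
  rw [dispersion_eq hw.2]
  linarith [sq_nonneg ‖∑ i, w i • v i‖]

lemma exists_le_sum_mul {w : ι → ℝ} (hw : w ∈ stdSimplex ℝ ι) (g : ι → ℝ) :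
    ∃ i, g i ≤ ∑ j, w j * g j := by
  by_contra! hlt
  have hmean : ∑ j, w j • g j ∈ Set.Ioi (∑ j, w j * g j) :=
    (convex_Ioi _).sum_mem (fun i _ => hw.1 i) hw.2 fun i _ => hlt i
  exact (Set.mem_Ioi.mp hmean).ne rfl

-- Greedy derandomization: each new vertex is chosen to do no worse than a random one.
lemma exists_norm_add_sum_sub_mean_sq_le {w : ι → ℝ} (hw : w ∈ stdSimplex ℝ ι) (v : ι → E)
    (a : E) (m : ℕ) :
    ∃ u : Fin m → ι, ‖a + ∑ q, (v (u q) - ∑ i, w i • v i)‖ ^ 2 ≤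
      ‖a‖ ^ 2 + m * dispersion w v := by
  set mean := ∑ i, w i • v i with hmean
  induction m with
  | zero => exact ⟨Fin.elim0, by simp⟩
  | succ m ih =>
    obtain ⟨u, hu⟩ := ih
    set s := a + ∑ q, (v (u q) - mean) with hs
    obtain ⟨i, hi⟩ := exists_le_sum_mul hw fun i => ‖v i - (mean - s)‖ ^ 2
    rw [sum_mul_norm_sub_sq hw.2, ← hmean, sub_sub_cancel] at hi
    refine ⟨Fin.snoc (α := fun _ => ι) u i, ?_⟩
    have hstep : a + ∑ q, (v (Fin.snoc (α := fun _ => ι) u i q) - mean) = v i - (mean - s) := by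
      rw [Fin.sum_univ_castSucc]
      simp only [Fin.snoc_castSucc, Fin.snoc_last, hs]
      abel
    rw [hstep]
    push_cast
    linarith

-- Maurey's argument.
lemma exists_norm_average_sub_sq_le {w : ι → ℝ} (hw : w ∈ stdSimplex ℝ ι) (v : ι → E) (f : E)
    {m : ℕ} (hm : m ≠ 0) :
    ∃ u : Fin m → ι, ‖(m : ℝ)⁻¹ • ∑ q, v (u q) - f‖ ^ 2 ≤
      ‖∑ i, w i • v i - f‖ ^ 2 + dispersion w v / m := by
  have hm' : (m : ℝ) ≠ 0 := Nat.cast_ne_zero.mpr hm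
  set mean := ∑ i, w i • v i with hmean
  obtain ⟨u, hu⟩ := exists_norm_add_sum_sub_mean_sq_le hw v ((m : ℝ) • (mean - f)) m
  refine ⟨u, ?_⟩
  have hscale : (m : ℝ) • (mean - f) + ∑ q, (v (u q) - mean) =
      (m : ℝ) • ((m : ℝ)⁻¹ • ∑ q, v (u q) - f) := by
    rw [sum_sub_distrib, sum_const, card_univ, Fintype.card_fin, ← Nat.cast_smul_eq_nsmul ℝ,
      smul_sub _ ((m : ℝ)⁻¹ • _), smul_inv_smul₀ hm', smul_sub]
    abel
  rw [← hmean, hscale, norm_smul, norm_smul, mul_pow, mul_pow, Real.norm_natCast] at hu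
  refine le_of_mul_le_mul_left ?_ (by positivity : 0 < (m : ℝ) ^ 2)
  calc (m : ℝ) ^ 2 * ‖(m : ℝ)⁻¹ • ∑ q, v (u q) - f‖ ^ 2
      ≤ (m : ℝ) ^ 2 * ‖mean - f‖ ^ 2 + m * dispersion w v := hu
    _ = (m : ℝ) ^ 2 * (‖mean - f‖ ^ 2 + dispersion w v / m) := by field_simp

end WeightedMeans

section PenalizedCriterion

variable {ι E : Type*} [Fintype ι] [NormedAddCommGroup E] [InnerProductSpace ℝ E]

/-- The criterion `H_pen` for estimators `ν i` of the mean of an observation `y` in an inner product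
space, as a function of the aggregation weights; `c i` stands for `2σ² Tr A_i`. -/
def penalizedCriterion (ν : ι → E) (c : ι → ℝ) (y : E) (w : ι → ℝ) : ℝ :=
  ‖∑ i, w i • ν i‖ ^ 2 - 2 * ⟪y, ∑ i, w i • ν i⟫ + ∑ i, w i * c i + dispersion w ν / 2

variable {ν : ι → E} {c : ι → ℝ} {w w' : ι → ℝ}

lemma penalizedCriterion_eq (hw : ∑ i, w i = 1) (y : E) :
    penalizedCriterion ν c y w =
      ‖∑ i, w i • ν i‖ ^ 2 / 2 + ∑ i, w i * (c i - 2 * ⟪y, ν i⟫ + ‖ν i‖ ^ 2 / 2) := by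
  rw [penalizedCriterion, dispersion_eq hw, inner_sum]
  simp_rw [real_inner_smul_right, mul_add, mul_sub, sum_add_distrib, sum_sub_distrib, mul_sum,
    mul_left_comm _ (2 : ℝ), mul_div_assoc', ← sum_div]
  ring

lemma norm_segment_sq (x z : E) (t : ℝ) :
    ‖(1 - t) • x + t • z‖ ^ 2 =
      (1 - t) * ‖x‖ ^ 2 + t * ‖z‖ ^ 2 - t * (1 - t) * ‖x - z‖ ^ 2 := by
  rw [norm_add_sq_real, norm_sub_sq_real, norm_smul, norm_smul, real_inner_smul_left,
    real_inner_smul_right, mul_pow, mul_pow, Real.norm_eq_abs, Real.norm_eq_abs, sq_abs, sq_abs]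
  ring

lemma penalizedCriterion_segment (hw : ∑ i, w i = 1) (hw' : ∑ i, w' i = 1) (y : E) (t : ℝ) :
    penalizedCriterion ν c y ((1 - t) • w + t • w') =
      (1 - t) * penalizedCriterion ν c y w + t * penalizedCriterion ν c y w'
        - t * (1 - t) * (‖∑ i, w i • ν i - ∑ i, w' i • ν i‖ ^ 2 / 2) := by
  have hmass : ∑ i, ((1 - t) • w + t • w') i = 1 := by
    simp [sum_add_distrib, ← mul_sum, hw, hw']
  have hmean : ∑ i, ((1 - t) • w + t • w') i • ν i =
      (1 - t) • ∑ i, w i • ν i + t • ∑ i, w' i • ν i := by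
    simp [add_smul, sum_add_distrib, smul_sum, mul_smul]
  have hlin (ℓ : ι → ℝ) : ∑ i, ((1 - t) • w + t • w') i * ℓ i =
      (1 - t) * ∑ i, w i * ℓ i + t * ∑ i, w' i * ℓ i := by
    simp [add_mul, sum_add_distrib, mul_sum, mul_assoc]
  rw [penalizedCriterion_eq hmass, penalizedCriterion_eq hw, penalizedCriterion_eq hw', hmean,
    hlin, norm_segment_sq]
  ring

lemma penalizedCriterion_add_norm_sub_sq_le {y : E} (hw : w ∈ stdSimplex ℝ ι)
    (hmin : ∀ w' ∈ stdSimplex ℝ ι, penalizedCriterion ν c y w ≤ penalizedCriterion ν c y w')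
    (hw' : w' ∈ stdSimplex ℝ ι) :
    penalizedCriterion ν c y w + ‖∑ i, w i • ν i - ∑ i, w' i • ν i‖ ^ 2 / 2 ≤
      penalizedCriterion ν c y w' := by
  set gap := ‖∑ i, w i • ν i - ∑ i, w' i • ν i‖ ^ 2 / 2 with hgap
  have hsegment (t : ℝ) (ht : t ∈ Set.Ioo (0 : ℝ) 1) :
      penalizedCriterion ν c y w + (1 - t) * gap ≤ penalizedCriterion ν c y w' := by
    have hle := hmin _ (convex_stdSimplex ℝ ι hw hw' (sub_nonneg.mpr ht.2.le) ht.1.le (by ring))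
    rw [penalizedCriterion_segment hw.2 hw'.2, ← hgap] at hle
    refine le_of_mul_le_mul_left ?_ ht.1
    linarith
  have hlim : Filter.Tendsto (fun t : ℝ => penalizedCriterion ν c y w + (1 - t) * gap)
      (nhdsWithin 0 (Set.Ioi 0)) (nhds (penalizedCriterion ν c y w + (1 - 0) * gap)) :=
    (Continuous.tendsto (by fun_prop) 0).mono_left nhdsWithin_le_nhds
  rw [sub_zero, one_mul] at hlim
  exact le_of_tendsto hlim (Filter.mem_of_superset (Ioo_mem_nhdsGT one_pos) hsegment)

lemma norm_aggregate_sub_sq_le {f ξ : E} (hw : w ∈ stdSimplex ℝ ι)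
    (hmin : ∀ w' ∈ stdSimplex ℝ ι,
      penalizedCriterion ν c (f + ξ) w ≤ penalizedCriterion ν c (f + ξ) w') (k : ι) :
    ‖∑ i, w i • ν i - f‖ ^ 2 ≤ ‖ν k - f‖ ^ 2 +
      ∑ i, w i * (2 * ⟪ξ, ν i - ν k⟫ - (c i - c k) - ‖ν i - ν k‖ ^ 2 / 2) := by
  classical
  have hgrowth := penalizedCriterion_add_norm_sub_sq_le hw hmin (single_mem_stdSimplex ℝ k)
  have hvertex : penalizedCriterion ν c (f + ξ) (Pi.single k 1) =
      ‖ν k‖ ^ 2 - 2 * ⟪f + ξ, ν k⟫ + c k := by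
    rw [penalizedCriterion_eq (by simp)]
    simp only [Pi.single_apply, ite_smul, one_smul, zero_smul, sum_ite_eq', mem_univ, ↓reduceIte,
      ite_mul, one_mul, zero_mul]
    ring
  have hvertex_mean : ∑ i, (Pi.single k 1 : ι → ℝ) i • ν i = ν k := by simp [Pi.single_apply]
  have hsum : ∑ i, w i * (2 * ⟪ξ, ν i - ν k⟫ - (c i - c k) - ‖ν i - ν k‖ ^ 2 / 2) =
      2 * ⟪ξ, ∑ i, w i • ν i - ν k⟫ - (∑ i, w i * c i - c k) -
        (‖∑ i, w i • ν i - ν k‖ ^ 2 + dispersion w ν) / 2 := by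
    rw [← sum_mul_norm_sub_sq hw.2, inner_sub_right, inner_sum]
    simp_rw [inner_sub_right, real_inner_smul_right, mul_sub, sum_sub_distrib, ← sum_mul, hw.2,
      mul_left_comm _ (2 : ℝ), ← mul_sum, mul_div_assoc', ← sum_div]
    ring
  rw [hvertex, hvertex_mean, penalizedCriterion] at hgrowth
  rw [hsum, norm_sub_sq_real _ f, norm_sub_sq_real _ f, inner_sub_right, real_inner_comm f,
    real_inner_comm f]
  simp only [inner_add_left] at hgrowth
  linarith

end PenalizedCriterion

section GaussianLaplace

lemma inv_one_sub_two_mul_le_exp {d : ℝ} (hd : d ≤ 1 / 4) :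
    (1 - 2 * d)⁻¹ ≤ Real.exp (2 * d + 4 * d ^ 2) := by
  have hpos : 0 < 1 - 2 * d := by linarith
  rw [inv_le_iff_one_le_mul₀ hpos]
  rcases le_total 0 d with hd0 | hd0
  · have hremainder : 0 ≤ d ^ 2 * (1 - 2 * d - 4 * d ^ 2 - 8 * d ^ 3) := by
      have hsq : d ^ 2 ≤ (1 / 4) ^ 2 := by gcongr
      have hcube : d ^ 3 ≤ (1 / 4) ^ 3 := by gcongr
      exact mul_nonneg (sq_nonneg d) (by linarith)
    calc (1 : ℝ)
        ≤ (1 + (2 * d + 4 * d ^ 2) + (2 * d + 4 * d ^ 2) ^ 2 / 2) * (1 - 2 * d) := by linarith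
      _ ≤ Real.exp (2 * d + 4 * d ^ 2) * (1 - 2 * d) := by
        gcongr
        exact Real.quadratic_le_exp_of_nonneg (by positivity)
  · calc (1 : ℝ)
        ≤ (2 * d + 4 * d ^ 2 + 1) * (1 - 2 * d) := by
          linarith [mul_nonneg (neg_nonneg.mpr hd0) (sq_nonneg d)]
      _ ≤ Real.exp (2 * d + 4 * d ^ 2) * (1 - 2 * d) := by
        gcongr
        exact Real.add_one_le_exp _

lemma lintegral_exp_quadratic_gaussianReal {d : ℝ} (hd : d < 1 / 2) (h : ℝ) :
    ∫⁻ z, ENNReal.ofReal (Real.exp (d * z ^ 2 + h * z)) ∂(gaussianReal 0 1) =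
      ENNReal.ofReal (√(1 - 2 * d)⁻¹ * Real.exp (h ^ 2 * (1 - 2 * d)⁻¹ / 2)) := by
  have hpos : 0 < 1 - 2 * d := by linarith
  lift (1 - 2 * d)⁻¹ to NNReal using (inv_pos.mpr hpos).le with v hv
  have hv0 : 0 < (v : ℝ) := hv ▸ inv_pos.mpr hpos
  have htilt (z : ℝ) : gaussianPDF 0 1 z * ENNReal.ofReal (Real.exp (d * z ^ 2 + h * z)) =
      ENNReal.ofReal (√v * Real.exp (h ^ 2 * v / 2)) * gaussianPDF (h * v) v z := by
    have hd_eq : d = (1 - (v : ℝ)⁻¹) / 2 := by rw [hv, inv_inv]; ring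
    rw [gaussianPDF, gaussianPDF, ← ENNReal.ofReal_mul (gaussianPDFReal_nonneg _ _ _),
      ← ENNReal.ofReal_mul (by positivity), gaussianPDFReal, gaussianPDFReal,
      Real.sqrt_mul (by positivity) (v : ℝ), mul_assoc, ← Real.exp_add, mul_mul_mul_comm,
      ← Real.exp_add, mul_inv, mul_left_comm √(v : ℝ), mul_inv_cancel₀ (by positivity)]
    simp only [NNReal.coe_one, mul_one, sub_zero]
    congr 3
    rw [hd_eq]
    field_simp
    ring
  rw [gaussianReal_of_var_ne_zero _ one_ne_zero,
    lintegral_withDensity_eq_lintegral_mul _ (measurable_gaussianPDF _ _) (by fun_prop)]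
  simp_rw [Pi.mul_apply, htilt]
  rw [lintegral_const_mul _ (measurable_gaussianPDF _ _),
    lintegral_gaussianPDF_eq_one _ (by exact_mod_cast hv0.ne'), mul_one]

lemma lintegral_exp_quadratic_gaussianReal_le {d : ℝ} (hd : d ≤ 1 / 4) (h : ℝ) :
    ∫⁻ z, ENNReal.ofReal (Real.exp (d * z ^ 2 + h * z)) ∂(gaussianReal 0 1) ≤
      ENNReal.ofReal (Real.exp (d + 2 * d ^ 2 + h ^ 2)) := by
  have hsqrt : √(1 - 2 * d)⁻¹ ≤ Real.exp (d + 2 * d ^ 2) := by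
    rw [Real.sqrt_le_left (Real.exp_pos _).le, ← Real.exp_nat_mul]
    convert inv_one_sub_two_mul_le_exp hd using 2
    push_cast
    ring
  have hinv : (1 - 2 * d)⁻¹ ≤ 2 := inv_le_of_inv_le₀ two_pos (by linarith)
  rw [lintegral_exp_quadratic_gaussianReal (by linarith), Real.exp_add]
  gcongr
  nlinarith [sq_nonneg h]

lemma lintegral_exp_sum_quadratic_pi_le {ι : Type*} [Fintype ι] {d : ι → ℝ}
    (hd : ∀ i, d i ≤ 1 / 4) (h : ι → ℝ) :
    ∫⁻ x, ENNReal.ofReal (Real.exp (∑ i, (d i * x i ^ 2 + h i * x i)))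
        ∂(Measure.pi fun _ : ι => gaussianReal 0 1) ≤
      ENNReal.ofReal (Real.exp (∑ i, (d i + 2 * d i ^ 2 + h i ^ 2))) := by
  simp_rw [Real.exp_sum, ENNReal.ofReal_prod_of_nonneg fun _ _ => (Real.exp_pos _).le]
  rw [lintegral_prod_eq_prod_lintegral_of_indepFun univ
    (fun i (x : ι → ℝ) => ENNReal.ofReal (Real.exp (d i * x i ^ 2 + h i * x i)))
    (iIndepFun_pi (X := fun i t => ENNReal.ofReal (Real.exp (d i * t ^ 2 + h i * t)))
      fun _ => by fun_prop) fun _ => by fun_prop]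
  refine prod_le_prod' fun i _ => ?_
  rw [(measurePreserving_eval (fun _ : ι => gaussianReal 0 1) i).lintegral_comp
    (f := fun t => ENNReal.ofReal (Real.exp (d i * t ^ 2 + h i * t))) (by fun_prop)]
  exact lintegral_exp_quadratic_gaussianReal_le (hd i) (h i)

variable {E : Type*} [NormedAddCommGroup E] [InnerProductSpace ℝ E] [FiniteDimensional ℝ E]

lemma trace_adjoint_mul_self {ι : Type*} [Fintype ι] (T : E →L[ℝ] E)
    (b : OrthonormalBasis ι ℝ E) :
    LinearMap.trace ℝ E (T.adjoint * T : E →L[ℝ] E) = ∑ i, ‖T (b i)‖ ^ 2 := by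
  rw [LinearMap.trace_eq_sum_inner _ b]
  simp [ContinuousLinearMap.adjoint_inner_right]

variable [MeasurableSpace E] [BorelSpace E]

-- In an eigenbasis of `T` the exponent decouples into one-dimensional quadratics.
lemma lintegral_exp_quadratic_stdGaussian_le {T : E →L[ℝ] E} (hT : IsSelfAdjoint T)
    (hform : ∀ z, ⟪z, T z⟫ ≤ 1 / 4 * ‖z‖ ^ 2) (h : E) :
    ∫⁻ z, ENNReal.ofReal (Real.exp (⟪z, T z⟫ + ⟪h, z⟫)) ∂(stdGaussian E) ≤
      ENNReal.ofReal (Real.exp (LinearMap.trace ℝ E T +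
        2 * LinearMap.trace ℝ E (T * T : E →L[ℝ] E) + ‖h‖ ^ 2)) := by
  set b := hT.isSymmetric.eigenvectorBasis rfl
  set d := hT.isSymmetric.eigenvalues rfl
  have happly (i) : T (b i) = d i • b i := hT.isSymmetric.apply_eigenvectorBasis rfl i
  have hd (i) : d i ≤ 1 / 4 := by
    simpa [happly, real_inner_smul_right] using hform (b i)
  have htrace : LinearMap.trace ℝ E T = ∑ i, d i := by
    simp [LinearMap.trace_eq_sum_inner _ b, happly, real_inner_smul_right]
  have htrace_sq : LinearMap.trace ℝ E (T * T : E →L[ℝ] E) = ∑ i, d i ^ 2 := by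
    nth_rw 1 [← hT.adjoint_eq]
    rw [trace_adjoint_mul_self _ b]
    simp [happly, norm_smul]
  have hcoord (x : Fin (Module.finrank ℝ E) → ℝ) :
      ⟪∑ i, x i • b i, T (∑ i, x i • b i)⟫ + ⟪h, ∑ i, x i • b i⟫ =
        ∑ i, (d i * x i ^ 2 + ⟪h, b i⟫ * x i) := by
    simp_rw [map_sum, map_smul, happly, smul_smul, b.orthonormal.inner_sum, inner_sum,
      real_inner_smul_right, ← sum_add_distrib]
    exact sum_congr rfl fun i _ => by simp only [Real.ringHom_apply]; ring
  rw [stdGaussian_eq_map_pi_orthonormalBasis b, lintegral_map (by fun_prop) (by fun_prop)]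
  simp_rw [hcoord]
  refine (lintegral_exp_sum_quadratic_pi_le hd _).trans_eq ?_
  rw [sum_add_distrib, sum_add_distrib, ← mul_sum, b.sum_sq_inner_left, htrace, htrace_sq]

lemma lintegral_exp_quadratic_sub_stdGaussian_le_one {T : E →L[ℝ] E} (hT : IsSelfAdjoint T)
    (hform : ∀ z, ⟪z, T z⟫ ≤ 1 / 4 * ‖z‖ ^ 2) {h : E} {K : ℝ}
    (hK : LinearMap.trace ℝ E T + 2 * LinearMap.trace ℝ E (T * T : E →L[ℝ] E) + ‖h‖ ^ 2 ≤ K) :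
    ∫⁻ z, ENNReal.ofReal (Real.exp (⟪z, T z⟫ + ⟪h, z⟫ - K)) ∂(stdGaussian E) ≤ 1 := by
  simp_rw [sub_eq_add_neg _ K, Real.exp_add _ (-K), ENNReal.ofReal_mul (Real.exp_pos _).le]
  rw [lintegral_mul_const _ (by fun_prop)]
  calc _ ≤ ENNReal.ofReal (Real.exp K) * ENNReal.ofReal (Real.exp (-K)) := by
        gcongr
        refine (lintegral_exp_quadratic_stdGaussian_le hT hform h).trans ?_
        gcongr
    _ = 1 := by
        rw [← ENNReal.ofReal_mul (Real.exp_pos K).le, ← Real.exp_add, add_neg_cancel,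
          Real.exp_zero, ENNReal.ofReal_one]

end GaussianLaplace

section ExponentialMoments

variable {Ω ι : Type*} [MeasurableSpace Ω] {μ : Measure Ω} {c : ℝ}

lemma measure_mul_lt_le_exp_neg {F : Ω → ℝ} (hF : AEMeasurable F μ) (hc : 0 < c)
    (hexp : ∫⁻ ω, ENNReal.ofReal (Real.exp (F ω / c)) ∂μ ≤ 1) (t : ℝ) :
    μ {ω | c * t < F ω} ≤ ENNReal.ofReal (Real.exp (-t)) := by
  calc μ {ω | c * t < F ω}
      ≤ μ {ω | ENNReal.ofReal (Real.exp t) ≤ ENNReal.ofReal (Real.exp (F ω / c))} := by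
        refine measure_mono fun ω hω => ENNReal.ofReal_le_ofReal (Real.exp_le_exp.mpr ?_)
        exact (le_div_iff₀' hc).mpr (Set.mem_ofPred_eq ▸ hω).le
    _ ≤ (∫⁻ ω, ENNReal.ofReal (Real.exp (F ω / c)) ∂μ) / ENNReal.ofReal (Real.exp t) :=
        meas_ge_le_lintegral_div (by fun_prop) (by simp [Real.exp_pos]) ENNReal.ofReal_ne_top
    _ ≤ 1 / ENNReal.ofReal (Real.exp t) := by gcongr
    _ = ENNReal.ofReal (Real.exp (-t)) := by
        rw [Real.exp_neg, ENNReal.ofReal_inv_of_pos (Real.exp_pos t), one_div]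

lemma measure_exists_mul_lt_le_exp_neg {s : Finset ι} {F : ι → Ω → ℝ}
    (htail : ∀ i ∈ s, ∀ t, μ {ω | c * t < F i ω} ≤ ENNReal.ofReal (Real.exp (-t))) (x : ℝ) :
    μ {ω | ∃ i ∈ s, c * (x + Real.log #s) < F i ω} ≤ ENNReal.ofReal (Real.exp (-x)) := by
  have hunion : {ω | ∃ i ∈ s, c * (x + Real.log #s) < F i ω} =
      ⋃ i ∈ s, {ω | c * (x + Real.log #s) < F i ω} := by
    ext ω
    simp
  rcases s.eq_empty_or_nonempty with rfl | hs
  · simp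
  have hcard : (0 : ℝ) < #s := by exact_mod_cast hs.card_pos
  rw [hunion]
  refine (measure_biUnion_finset_le s _).trans ((sum_le_card_nsmul s _ _ fun i hi =>
    htail i hi _).trans_eq ?_)
  rw [nsmul_eq_mul, ← ENNReal.ofReal_natCast, ← ENNReal.ofReal_mul hcard.le, neg_add,
    Real.exp_add, Real.exp_neg (Real.log _), Real.exp_log hcard]
  field_simp

end ExponentialMoments

section PenalizedChaos

lemma add_three_sq_le (a b c : ℝ) : (a + b + c) ^ 2 ≤ 3 * (a ^ 2 + b ^ 2 + c ^ 2) := by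
  linarith [sq_nonneg (a - b), sq_nonneg (b - c), sq_nonneg (a - c)]

variable {E : Type*} [NormedAddCommGroup E] [InnerProductSpace ℝ E]

/-- The centred Gaussian chaos `2⟪ξ, B ξ + g⟫ - 2τ Tr B`, compensated by half of the squared norm
of `B ξ + g`. For `τ = σ²` it is the stochastic term by which the penalized criterion
misjudges the difference `B ξ + g` of two affine estimators. -/
def penalizedChaos (B : E →L[ℝ] E) (g : E) (τ : ℝ) (ξ : E) : ℝ :=
  2 * ⟪ξ, B ξ + g⟫ - 2 * τ * LinearMap.trace ℝ E B - ‖B ξ + g‖ ^ 2 / 2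

lemma penalizedChaos_smul (B : E →L[ℝ] E) (g z : E) (σ : ℝ) :
    penalizedChaos B (σ • g) (σ ^ 2) (σ • z) = σ ^ 2 * penalizedChaos B g 1 z := by
  rw [penalizedChaos, penalizedChaos, map_smul, ← smul_add, norm_smul, real_inner_smul_left,
    real_inner_smul_right, mul_pow, Real.norm_eq_abs, sq_abs]
  ring

variable [FiniteDimensional ℝ E]

/-- The self-adjoint operator `B + B† - B†B / 2` of the quadratic part of `penalizedChaos B`. -/
def chaosOperator (B : E →L[ℝ] E) : E →L[ℝ] E :=
  B + B.adjoint - (1 / 2 : ℝ) • (B.adjoint * B)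

lemma isSelfAdjoint_chaosOperator (B : E →L[ℝ] E) : IsSelfAdjoint (chaosOperator B) := by
  rw [isSelfAdjoint_iff, chaosOperator]
  simp [← ContinuousLinearMap.star_eq_adjoint, add_comm]

lemma inner_chaosOperator (B : E →L[ℝ] E) (z : E) :
    ⟪z, chaosOperator B z⟫ = 2 * ⟪z, B z⟫ - ‖B z‖ ^ 2 / 2 := by
  simp only [chaosOperator, sub_apply, add_apply, smul_apply, mul_apply_eq_comp, inner_sub_right,
    inner_add_right, real_inner_smul_right, ContinuousLinearMap.adjoint_inner_right,
    real_inner_self_eq_norm_sq, real_inner_comm z (B z)]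
  ring

lemma inner_chaosOperator_le (B : E →L[ℝ] E) (z : E) :
    ⟪z, chaosOperator B z⟫ ≤ 2 * ‖z‖ ^ 2 := by
  have hsq : 0 ≤ ‖(2 : ℝ) • z - B z‖ ^ 2 := sq_nonneg _
  rw [norm_sub_sq_real, norm_smul, real_inner_smul_left, Real.norm_two] at hsq
  rw [inner_chaosOperator]
  linarith

lemma trace_chaosOperator (B : E →L[ℝ] E) :
    LinearMap.trace ℝ E (chaosOperator B) =
      2 * LinearMap.trace ℝ E B - LinearMap.trace ℝ E (B.adjoint * B : E →L[ℝ] E) / 2 := by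
  have hadjoint : LinearMap.trace ℝ E B.adjoint = LinearMap.trace ℝ E B := by
    simp only [LinearMap.trace_eq_sum_inner _ (stdOrthonormalBasis ℝ E),
      ContinuousLinearMap.coe_coe, ContinuousLinearMap.adjoint_inner_right, real_inner_comm]
  rw [chaosOperator, ContinuousLinearMap.toLinearMap_sub, ContinuousLinearMap.toLinearMap_add,
    ContinuousLinearMap.toLinearMap_smul, map_sub, map_add, map_smul, hadjoint, smul_eq_mul]
  ring

lemma trace_self_mul_adjoint (B : E →L[ℝ] E) :
    LinearMap.trace ℝ E (B * B.adjoint : E →L[ℝ] E) =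
      LinearMap.trace ℝ E (B.adjoint * B : E →L[ℝ] E) :=
  LinearMap.trace_mul_comm ℝ (B : E →ₗ[ℝ] E) B.adjoint

lemma trace_adjoint_mul_self_nonneg (B : E →L[ℝ] E) :
    0 ≤ LinearMap.trace ℝ E (B.adjoint * B : E →L[ℝ] E) := by
  rw [trace_adjoint_mul_self B (stdOrthonormalBasis ℝ E)]
  positivity

lemma norm_adjoint_apply_le {B : E →L[ℝ] E} {κ : ℝ} (hB : ‖B‖ ≤ κ) (z : E) :
    ‖B.adjoint z‖ ≤ κ * ‖z‖ :=
  B.adjoint.le_of_opNorm_le ((LinearIsometryEquiv.norm_map _ B).trans_le hB) z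

lemma norm_chaosOperator_apply_sq_le {B : E →L[ℝ] E} {κ : ℝ} (hB : ‖B‖ ≤ κ) (z : E) :
    ‖chaosOperator B z‖ ^ 2 ≤
      3 * ((1 + κ ^ 2 / 4) * ‖B z‖ ^ 2 + ‖B.adjoint z‖ ^ 2) := by
  have hquadratic : ‖(1 / 2 : ℝ) • B.adjoint (B z)‖ ≤ κ / 2 * ‖B z‖ := by
    rw [norm_smul, Real.norm_of_nonneg (by norm_num)]
    linarith [norm_adjoint_apply_le hB (B z)]
  have htriangle : ‖chaosOperator B z‖ ≤ ‖B z‖ + ‖B.adjoint z‖ + κ / 2 * ‖B z‖ :=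
    (norm_sub_le _ _).trans (add_le_add (norm_add_le _ _) hquadratic)
  calc ‖chaosOperator B z‖ ^ 2
      ≤ (‖B z‖ + ‖B.adjoint z‖ + κ / 2 * ‖B z‖) ^ 2 := by gcongr
    _ ≤ 3 * (‖B z‖ ^ 2 + ‖B.adjoint z‖ ^ 2 + (κ / 2 * ‖B z‖) ^ 2) := add_three_sq_le _ _ _
    _ = 3 * ((1 + κ ^ 2 / 4) * ‖B z‖ ^ 2 + ‖B.adjoint z‖ ^ 2) := by ring

lemma trace_chaosOperator_mul_self_le {B : E →L[ℝ] E} {κ : ℝ} (hB : ‖B‖ ≤ κ) :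
    LinearMap.trace ℝ E (chaosOperator B * chaosOperator B : E →L[ℝ] E) ≤
      3 * (2 + κ ^ 2 / 4) * LinearMap.trace ℝ E (B.adjoint * B : E →L[ℝ] E) := by
  set b := stdOrthonormalBasis ℝ E
  calc LinearMap.trace ℝ E (chaosOperator B * chaosOperator B : E →L[ℝ] E)
      = ∑ i, ‖chaosOperator B (b i)‖ ^ 2 := by
        nth_rw 1 [← (isSelfAdjoint_chaosOperator B).adjoint_eq]
        exact trace_adjoint_mul_self _ b
    _ ≤ ∑ i, 3 * ((1 + κ ^ 2 / 4) * ‖B (b i)‖ ^ 2 + ‖B.adjoint (b i)‖ ^ 2) :=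
        sum_le_sum fun i _ => norm_chaosOperator_apply_sq_le hB (b i)
    _ = 3 * (2 + κ ^ 2 / 4) * LinearMap.trace ℝ E (B.adjoint * B : E →L[ℝ] E) := by
        have hadjoint := trace_adjoint_mul_self B.adjoint b
        rw [ContinuousLinearMap.adjoint_adjoint, trace_self_mul_adjoint] at hadjoint
        rw [← mul_sum, sum_add_distrib, ← mul_sum, ← trace_adjoint_mul_self, ← hadjoint]
        ring

lemma penalizedChaos_one_eq (B : E →L[ℝ] E) (g z : E) :
    penalizedChaos B g 1 z =
      ⟪z, chaosOperator B z⟫ + ⟪(2 : ℝ) • g - B.adjoint g, z⟫ -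
        (LinearMap.trace ℝ E (chaosOperator B) +
          LinearMap.trace ℝ E (B.adjoint * B : E →L[ℝ] E) / 2 + ‖g‖ ^ 2 / 2) := by
  rw [penalizedChaos, inner_chaosOperator, trace_chaosOperator, norm_add_sq_real, inner_add_right,
    inner_sub_left, real_inner_smul_left, ContinuousLinearMap.adjoint_inner_left,
    real_inner_comm z g, real_inner_comm g (B z)]
  ring

lemma norm_two_smul_sub_adjoint_sq_le {B : E →L[ℝ] E} {κ : ℝ} (hB : ‖B‖ ≤ κ) (g : E) :
    ‖(2 : ℝ) • g - B.adjoint g‖ ^ 2 ≤ (8 + 2 * κ ^ 2) * ‖g‖ ^ 2 := by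
  have htriangle : ‖(2 : ℝ) • g - B.adjoint g‖ ≤ 2 * ‖g‖ + κ * ‖g‖ := by
    refine (norm_sub_le _ _).trans (add_le_add ?_ (norm_adjoint_apply_le hB g))
    rw [norm_smul, Real.norm_two]
  calc ‖(2 : ℝ) • g - B.adjoint g‖ ^ 2
      ≤ (2 * ‖g‖ + κ * ‖g‖) ^ 2 := by gcongr
    _ ≤ 2 * ((2 * ‖g‖) ^ 2 + (κ * ‖g‖) ^ 2) := add_sq_le
    _ = (8 + 2 * κ ^ 2) * ‖g‖ ^ 2 := by ring

lemma sq_mul_trace_add_norm_sq_le {B : E →L[ℝ] E} {κ : ℝ} (hB : ‖B‖ ≤ κ) (g : E) {s : ℝ}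
    (hs0 : 0 ≤ s) (hs : s * (4 * (6 + κ ^ 2)) ≤ 1) :
    2 * (s ^ 2 * LinearMap.trace ℝ E (chaosOperator B * chaosOperator B : E →L[ℝ] E)) +
        s ^ 2 * ‖(2 : ℝ) • g - B.adjoint g‖ ^ 2 ≤
      s * (LinearMap.trace ℝ E (B.adjoint * B : E →L[ℝ] E) / 2 + ‖g‖ ^ 2 / 2) := by
  have htrace := mul_le_mul_of_nonneg_left (trace_chaosOperator_mul_self_le hB) (sq_nonneg s)
  have hnorm := mul_le_mul_of_nonneg_left (norm_two_smul_sub_adjoint_sq_le hB g) (sq_nonneg s)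
  set F := LinearMap.trace ℝ E (B.adjoint * B : E →L[ℝ] E)
  have hF : 0 ≤ F := trace_adjoint_mul_self_nonneg B
  have hbudget : s * (12 * (2 + κ ^ 2 / 4)) ≤ 1 ∧ s * (2 * (8 + 2 * κ ^ 2)) ≤ 1 := by
    constructor <;> linarith [mul_nonneg hs0 (sq_nonneg κ)]
  have htrace_budget := mul_le_mul_of_nonneg_left hbudget.1 (mul_nonneg hs0 hF)
  have hnorm_budget := mul_le_mul_of_nonneg_left hbudget.2 (mul_nonneg hs0 (sq_nonneg ‖g‖))
  linarith

variable [MeasurableSpace E] [BorelSpace E]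

-- The terms `-Tr (B†B) / 2` and `-‖g‖² / 2` produced by the penalty absorb the second-order terms
-- of the Laplace transform, so that no variance term is left.
lemma lintegral_exp_penalizedChaos_le_one {B : E →L[ℝ] E} {κ : ℝ} (hB : ‖B‖ ≤ κ) (g : E) :
    ∫⁻ z, ENNReal.ofReal (Real.exp (penalizedChaos B g 1 z / (4 * (6 + κ ^ 2))))
      ∂(stdGaussian E) ≤ 1 := by
  set s : ℝ := (4 * (6 + κ ^ 2))⁻¹ with hs
  have hs_mul : s * (4 * (6 + κ ^ 2)) = 1 := inv_mul_cancel₀ (by positivity)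
  have hs0 : 0 < s := by positivity
  set K := LinearMap.trace ℝ E (chaosOperator B) +
    LinearMap.trace ℝ E (B.adjoint * B : E →L[ℝ] E) / 2 + ‖g‖ ^ 2 / 2 with hK
  have hexponent (z : E) : penalizedChaos B g 1 z / (4 * (6 + κ ^ 2)) =
      ⟪z, (s • chaosOperator B) z⟫ + ⟪s • ((2 : ℝ) • g - B.adjoint g), z⟫ - s * K := by
    rw [penalizedChaos_one_eq, ← hK, smul_apply, real_inner_smul_right, real_inner_smul_left,
      div_eq_inv_mul, ← hs]
    ring
  simp_rw [hexponent]
  refine lintegral_exp_quadratic_sub_stdGaussian_le_one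
    ((IsSelfAdjoint.all s).smul (isSelfAdjoint_chaosOperator B)) (fun z => ?_) ?_
  · rw [smul_apply, real_inner_smul_right]
    have hs_le : s ≤ 1 / 8 := by linarith [mul_nonneg hs0.le (sq_nonneg κ)]
    calc s * ⟪z, chaosOperator B z⟫ ≤ s * (2 * ‖z‖ ^ 2) := by
          gcongr
          exact inner_chaosOperator_le B z
      _ ≤ 1 / 8 * (2 * ‖z‖ ^ 2) := by gcongr
      _ = 1 / 4 * ‖z‖ ^ 2 := by ring
  · rw [smul_mul_smul_comm, ContinuousLinearMap.toLinearMap_smul,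
      ContinuousLinearMap.toLinearMap_smul, map_smul, map_smul, norm_smul, mul_pow,
      Real.norm_of_nonneg hs0.le, smul_eq_mul, smul_eq_mul, ← sq, hK]
    linarith [sq_mul_trace_add_norm_sq_le hB g hs0.le hs_mul.le]

lemma stdGaussian_penalizedChaos_tail {B : E →L[ℝ] E} {κ : ℝ} (hB : ‖B‖ ≤ κ) (g : E) (t : ℝ) :
    stdGaussian E {z | 4 * (6 + κ ^ 2) * t < penalizedChaos B g 1 z} ≤
      ENNReal.ofReal (Real.exp (-t)) :=
  measure_mul_lt_le_exp_neg (by unfold penalizedChaos; fun_prop) (by positivity)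
    (lintegral_exp_penalizedChaos_le_one hB g) t

lemma stdGaussian_smul_penalizedChaos_tail {B : E →L[ℝ] E} {κ : ℝ} (hB : ‖B‖ ≤ κ) (g : E)
    (σ t : ℝ) :
    stdGaussian E {z | 4 * (6 + κ ^ 2) * σ ^ 2 * t < penalizedChaos B g (σ ^ 2) (σ • z)} ≤
      ENNReal.ofReal (Real.exp (-t)) := by
  rcases eq_or_ne σ 0 with rfl | hσ
  · have hnonpos : ¬ 0 < -(‖g‖ ^ 2 / 2) := not_lt.mpr (neg_nonpos.mpr (by positivity))
    simp [penalizedChaos, hnonpos]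
  · refine (measure_mono fun z hz => ?_).trans (stdGaussian_penalizedChaos_tail hB (σ⁻¹ • g) t)
    rw [Set.mem_ofPred_eq, ← smul_inv_smul₀ hσ g, penalizedChaos_smul, mul_right_comm,
      mul_comm _ (σ ^ 2)] at hz
    exact lt_of_mul_lt_mul_left hz (sq_nonneg σ)

lemma lintegral_exp_norm_sq_stdGaussian_le_one :
    ∫⁻ z, ENNReal.ofReal (Real.exp ((‖z‖ ^ 2 - 3 / 2 * Module.finrank ℝ E) / 4))
      ∂(stdGaussian E) ≤ 1 := by
  have hquadratic (z : E) : (‖z‖ ^ 2 - 3 / 2 * Module.finrank ℝ E) / 4 =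
      ⟪z, ((1 / 4 : ℝ) • (1 : E →L[ℝ] E)) z⟫ + ⟪(0 : E), z⟫ - 3 / 8 * Module.finrank ℝ E := by
    simp only [one_div, smul_apply, one_apply_eq_self, real_inner_smul_right,
      inner_self_eq_norm_sq_to_K, Real.ringHom_apply, inner_zero_left, add_zero]
    ring
  simp_rw [hquadratic]
  refine lintegral_exp_quadratic_sub_stdGaussian_le_one
    ((IsSelfAdjoint.all _).smul (IsSelfAdjoint.one _)) (fun z => ?_) ?_
  · simp [real_inner_smul_right]
  · simp only [one_div, ContinuousLinearMap.toLinearMap_smul, ContinuousLinearMap.toLinearMap_one,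
      map_smul, LinearMap.trace_one, smul_eq_mul, Algebra.mul_smul_comm, mul_one, norm_zero, ne_eq,
      OfNat.ofNat_ne_zero, not_false_eq_true, zero_pow, add_zero]
    linarith

lemma stdGaussian_norm_sq_tail (t : ℝ) :
    stdGaussian E {z | 4 * t < ‖z‖ ^ 2 - 3 / 2 * Module.finrank ℝ E} ≤
      ENNReal.ofReal (Real.exp (-t)) :=
  measure_mul_lt_le_exp_neg (by fun_prop) four_pos lintegral_exp_norm_sq_stdGaussian_le_one t

lemma stdGaussian_smul_norm_sq_tail (σ t : ℝ) :
    stdGaussian E {z | σ ^ 2 * (4 * t + 3 / 2 * Module.finrank ℝ E) < ‖σ • z‖ ^ 2} ≤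
      ENNReal.ofReal (Real.exp (-t)) := by
  refine (measure_mono fun z hz => ?_).trans (stdGaussian_norm_sq_tail t)
  rw [Set.mem_ofPred_eq, norm_smul, mul_pow, Real.norm_eq_abs, sq_abs] at hz
  exact lt_sub_iff_add_lt.mpr (lt_of_mul_lt_mul_left hz (sq_nonneg σ))

end PenalizedChaos

section AffineMixtures

variable {ι E : Type*} [Fintype ι] [NormedAddCommGroup E] [InnerProductSpace ℝ E]

/-- The convex combination `∑ j, θ j (T j y + β j)` of affine estimators in an inner product space,
the coordinate-free form of `muV`. -/
def affineMixture (T : ι → E →L[ℝ] E) (β : ι → E) (θ : ι → ℝ) (y : E) : E :=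
  ∑ j, θ j • (T j y + β j)

variable {T : ι → E →L[ℝ] E} {β : ι → E} {θ θ' : ι → ℝ} {f ξ : E}

lemma affineMixture_sub (T : ι → E →L[ℝ] E) (β : ι → E) (θ θ' : ι → ℝ) (y : E) :
    affineMixture T β (θ - θ') y = affineMixture T β θ y - affineMixture T β θ' y := by
  simp only [affineMixture, Pi.sub_apply, sub_smul, sum_sub_distrib]

lemma affineMixture_add (T : ι → E →L[ℝ] E) (β : ι → E) (θ : ι → ℝ) (f ξ : E) :
    affineMixture T β θ (f + ξ) = (∑ j, θ j • T j) ξ + affineMixture T β θ f := by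
  rw [affineMixture, affineMixture, _root_.sum_apply, ← sum_add_distrib]
  refine sum_congr rfl fun j _ => ?_
  rw [map_add, smul_apply, ← smul_add, add_comm (T j f), add_assoc]

lemma norm_sum_sub_smul_le_two (hT : ∀ j, ‖T j‖ ≤ 1) (hθ : θ ∈ stdSimplex ℝ ι)
    (hθ' : θ' ∈ stdSimplex ℝ ι) : ‖∑ j, (θ - θ') j • T j‖ ≤ 2 := by
  have hle_one {w : ι → ℝ} (hw : w ∈ stdSimplex ℝ ι) : ‖∑ j, w j • T j‖ ≤ 1 := by
    have hball := (convex_closedBall (0 : E →L[ℝ] E) 1).sum_mem (fun j _ => hw.1 j) hw.2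
      fun j _ => mem_closedBall_zero_iff.mpr (hT j)
    exact mem_closedBall_zero_iff.mp hball
  simp_rw [Pi.sub_apply, sub_smul, sum_sub_distrib]
  linarith [norm_sub_le (∑ j, θ j • T j) (∑ j, θ' j • T j), hle_one hθ, hle_one hθ']

lemma norm_apply_add_sq_le {S : E →L[ℝ] E} (hS : ‖S‖ ≤ 1) (f ξ β : E) :
    ‖S (f + ξ) + β‖ ^ 2 ≤ 3 * (‖f‖ ^ 2 + ‖ξ‖ ^ 2 + ‖β‖ ^ 2) := by
  have htriangle : ‖S (f + ξ) + β‖ ≤ ‖f‖ + ‖ξ‖ + ‖β‖ := by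
    have hcontract : ‖S (f + ξ)‖ ≤ ‖f + ξ‖ := by simpa using S.le_of_opNorm_le hS (f + ξ)
    linarith [norm_add_le (S (f + ξ)) β, norm_add_le f ξ]
  exact (pow_le_pow_left₀ (norm_nonneg _) htriangle 2).trans (add_three_sq_le _ _ _)

lemma penalizedChaos_affineMixture (T : ι → E →L[ℝ] E) (β : ι → E) (θ θ' : ι → ℝ) (f ξ : E)
    (τ : ℝ) :
    penalizedChaos (∑ j, (θ - θ') j • T j) (affineMixture T β (θ - θ') f) τ ξ =
      2 * ⟪ξ, affineMixture T β θ (f + ξ) - affineMixture T β θ' (f + ξ)⟫ -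
        (2 * τ * ∑ j, θ j * LinearMap.trace ℝ E (T j) -
          2 * τ * ∑ j, θ' j * LinearMap.trace ℝ E (T j)) -
        ‖affineMixture T β θ (f + ξ) - affineMixture T β θ' (f + ξ)‖ ^ 2 / 2 := by
  have htrace : LinearMap.trace ℝ E (∑ j, (θ - θ') j • T j : E →L[ℝ] E) =
      ∑ j, θ j * LinearMap.trace ℝ E (T j) - ∑ j, θ' j * LinearMap.trace ℝ E (T j) := by
    simp [sub_mul, map_sum]
  rw [penalizedChaos, ← affineMixture_add, affineMixture_sub, htrace]
  ring

/-- The noise vectors on which, for all pairs of mixture weights in `G`, the stochastic term of the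
penalized criterion is controlled, and the norm of the noise is of its typical order. The
constant `40` is `4 * (6 + κ ^ 2)` at `κ = 2`, the bound on the norm of the difference of two
mixtures of contractions. -/
def typicalNoise (T : ι → E →L[ℝ] E) (β : ι → E) (f : E) (σ : ℝ) (G : Finset (ι → ℝ)) (x : ℝ) :
    Set E :=
  {ξ | (∀ p ∈ G ×ˢ G, penalizedChaos (∑ j, (p.1 - p.2) j • T j)
      (affineMixture T β (p.1 - p.2) f) (σ ^ 2) ξ ≤ 40 * σ ^ 2 * (x + 2 * Real.log #G)) ∧
    ‖ξ‖ ^ 2 ≤ σ ^ 2 * (4 * x + 3 / 2 * Module.finrank ℝ E)}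

lemma measurableSet_typicalNoise [FiniteDimensional ℝ E] [MeasurableSpace E] [BorelSpace E]
    (σ : ℝ) (G : Finset (ι → ℝ)) (x : ℝ) : MeasurableSet (typicalNoise T β f σ G x) := by
  have hclosed : IsClosed (typicalNoise T β f σ G x) := by
    simp only [typicalNoise, penalizedChaos, Set.ofPred_and, Set.ofPred_forall]
    exact (isClosed_biInter fun p _ => isClosed_le (by fun_prop) (by fun_prop)).inter
      (isClosed_le (by fun_prop) (by fun_prop))
  exact hclosed.measurableSet

lemma stdGaussian_smul_notMem_typicalNoise_le [FiniteDimensional ℝ E] [MeasurableSpace E]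
    [BorelSpace E] (hT : ∀ j, ‖T j‖ ≤ 1) {G : Finset (ι → ℝ)} (hG : ∀ θ ∈ G, θ ∈ stdSimplex ℝ ι)
    (σ x : ℝ) :
    stdGaussian E {z | σ • z ∉ typicalNoise T β f σ G x} ≤
      ENNReal.ofReal (2 * Real.exp (-x)) := by
  have hchaos := measure_exists_mul_lt_le_exp_neg (s := G ×ˢ G) (μ := stdGaussian E)
    (c := 40 * σ ^ 2) (F := fun p z => penalizedChaos (∑ j, (p.1 - p.2) j • T j)
      (affineMixture T β (p.1 - p.2) f) (σ ^ 2) (σ • z)) (fun p hp t => by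
        have hp' := mem_product.mp hp
        have htail := stdGaussian_smul_penalizedChaos_tail
          (norm_sum_sub_smul_le_two hT (hG _ hp'.1) (hG _ hp'.2))
          (affineMixture T β (p.1 - p.2) f) σ t
        rwa [show (4 * (6 + 2 ^ 2) : ℝ) = 40 by norm_num] at htail) x
  have hlog : Real.log #(G ×ˢ G) = 2 * Real.log #G := by
    rw [card_product, ← sq, Nat.cast_pow, Real.log_pow, Nat.cast_two]
  rw [hlog] at hchaos
  rw [two_mul (Real.exp _), ENNReal.ofReal_add (Real.exp_pos _).le (Real.exp_pos _).le]
  refine (measure_mono fun z hz => ?_).trans ((measure_union_le _ _).trans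
    (add_le_add hchaos (stdGaussian_smul_norm_sq_tail σ x)))
  by_contra hnot
  refine hz ?_
  simpa [typicalNoise] using hnot

lemma norm_aggregate_affineMixture_sub_sq_le {κ : Type*} [Fintype κ] {p : κ → ι → ℝ} {w : κ → ℝ}
    {σ x : ℝ} {G : Finset (ι → ℝ)} (hp : ∀ i, p i ∈ G) (hξ : ξ ∈ typicalNoise T β f σ G x)
    (hw : w ∈ stdSimplex ℝ κ)
    (hmin : ∀ w' ∈ stdSimplex ℝ κ,
      penalizedCriterion (fun i => affineMixture T β (p i) (f + ξ))
          (fun i => 2 * σ ^ 2 * ∑ j, p i j * LinearMap.trace ℝ E (T j)) (f + ξ) w ≤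
        penalizedCriterion (fun i => affineMixture T β (p i) (f + ξ))
          (fun i => 2 * σ ^ 2 * ∑ j, p i j * LinearMap.trace ℝ E (T j)) (f + ξ) w')
    (k : κ) :
    ‖∑ i, w i • affineMixture T β (p i) (f + ξ) - f‖ ^ 2 ≤
      ‖affineMixture T β (p k) (f + ξ) - f‖ ^ 2 + 40 * σ ^ 2 * (x + 2 * Real.log #G) := by
  refine (norm_aggregate_sub_sq_le hw hmin k).trans (add_le_add_right ?_ _)
  simp_rw [← penalizedChaos_affineMixture]
  exact Set.mem_Iic.mp <| (convex_Iic (𝕜 := ℝ) (40 * σ ^ 2 * (x + 2 * Real.log #G))).sum_mem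
    (fun i _ => hw.1 i) hw.2 fun i _ => hξ.1 (p i, p k) (mem_product.mpr ⟨hp i, hp k⟩)

end AffineMixtures

section GridEntropy

lemma card_image_gridPoint_le (M m : ℕ) : #(univ.image (gridPoint M m)) ≤ (M + m).choose m := by
  have hsub : univ.image (gridPoint M m) ⊆
      (univ : Finset (Sym (Fin M) m)).image fun s j => (s.1.count j : ℝ) / m := by
    refine image_subset_iff.mpr fun u _ => mem_image.mpr ⟨⟨univ.val.map u, by simp⟩, mem_univ _, ?_⟩
    ext j
    rw [gridPoint, Multiset.count_map, sum_boole, card_def, filter_val]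
    simp only [eq_comm]
  calc #(univ.image (gridPoint M m)) ≤ Fintype.card (Sym (Fin M) m) :=
        (card_le_card hsub).trans card_image_le
    _ = (M + m - 1).choose m := by rw [Sym.card_sym_eq_choose, Fintype.card_fin]
    _ ≤ (M + m).choose m := Nat.choose_le_choose _ (Nat.sub_le _ _)

lemma log_choose_le {M m : ℕ} (hM : M ≠ 0) (hm : m ≠ 0) :
    Real.log ((M + m).choose m) ≤ m * Real.log (1 + M / m) + M * Real.log (1 + m / M) := by
  have hM' : (0 : ℝ) < M := Nat.cast_pos.mpr hM.bot_lt
  have hm' : (0 : ℝ) < m := Nat.cast_pos.mpr hm.bot_lt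
  have hchoose : (0 : ℝ) < (M + m).choose m :=
    Nat.cast_pos.mpr (Nat.choose_pos (Nat.le_add_left m M))
  have hterm : (m : ℝ) ^ m * M ^ M * (M + m).choose m ≤ (m + M : ℝ) ^ (m + M) := by
    rw [add_pow]
    have hsingle := single_le_sum (s := range (m + M + 1))
      (f := fun k => (m : ℝ) ^ k * M ^ (m + M - k) * (m + M).choose k)
      (fun _ _ => by positivity) (mem_range.mpr (by lia : m < m + M + 1))
    simpa [add_comm M m] using hsingle
  have hlog := Real.log_le_log (by positivity) hterm
  rw [Real.log_mul (by positivity) hchoose.ne', Real.log_mul (by positivity) (by positivity),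
    Real.log_pow, Real.log_pow, Real.log_pow, Nat.cast_add] at hlog
  rw [one_add_div hm'.ne', one_add_div hM'.ne', add_comm (M : ℝ) m,
    Real.log_div (by positivity) hm'.ne', Real.log_div (by positivity) hM'.ne']
  linarith

lemma mul_log_one_add_div_le {x y c : ℝ} (hx : 0 < x) (hxy : x ≤ y) (hc : 0 ≤ c) :
    x * Real.log (1 + c / x) ≤ y * Real.log (1 + c / y) := by
  have hy : 0 < y := hx.trans_le hxy
  have hbernoulli : 1 + y / x * (c / y) ≤ (1 + c / y) ^ (y / x) :=
    one_add_mul_self_le_rpow_one_add (by linarith [div_nonneg hc hy.le]) ((one_le_div hx).mpr hxy)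
  rw [div_mul_div_cancel₀' hy.ne'] at hbernoulli
  have hlog := Real.log_le_log (by positivity) hbernoulli
  rw [Real.log_rpow (by positivity), div_mul_eq_mul_div, le_div_iff₀ hx] at hlog
  linarith

lemma log_one_add_mul_sqrt_log_le {r : ℝ} (hr : 0 ≤ r) :
    Real.log (1 + r * √(Real.log (1 + r))) ≤ 2 * Real.log (1 + r) := by
  have hlog_nonneg : 0 ≤ Real.log (1 + r) := Real.log_nonneg (by linarith)
  have hlog_le : Real.log (1 + r) ≤ r := by
    linarith [Real.log_le_sub_one_of_pos (by linarith : 0 < 1 + r)]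
  have hsq : 1 + r * √(Real.log (1 + r)) ≤ (1 + r) ^ 2 := by
    nlinarith [Real.sq_sqrt hlog_nonneg, sq_nonneg (√(Real.log (1 + r)) - 1)]
  have hpos : 0 < 1 + r * √(Real.log (1 + r)) := by positivity
  simpa using Real.log_le_log hpos hsq

lemma one_le_sqrt_log_mul_sqrt {r : ℝ} (hr : 0 < r) :
    1 ≤ √(Real.log (1 + r)) * √(1 + r⁻¹) := by
  rw [← Real.sqrt_mul (Real.log_nonneg (by linarith)), Real.one_le_sqrt]
  have hlog := Real.one_sub_inv_le_log_of_pos (by linarith : 0 < 1 + r)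
  calc 1 = (1 - (1 + r)⁻¹) * (1 + r⁻¹) := by field_simp; ring
    _ ≤ Real.log (1 + r) * (1 + r⁻¹) := by gcongr

lemma log_one_add_inv_mul_sqrt_log_le {r : ℝ} (hr : 0 < r) :
    Real.log (1 + (r * √(Real.log (1 + r)))⁻¹) ≤ 4 * (r⁻¹ * √(Real.log (1 + r))) := by
  have hqw := one_le_sqrt_log_mul_sqrt hr
  have hq : 0 < √(Real.log (1 + r)) := Real.sqrt_pos.mpr (Real.log_pos (by linarith))
  have ht : 0 < r⁻¹ := inv_pos.mpr hr
  rw [mul_inv]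
  generalize √(Real.log (1 + r)) = q at hqw hq
  generalize r⁻¹ = t at hqw ht
  have hw_sq : √(1 + t) ^ 2 = 1 + t := Real.sq_sqrt (by linarith)
  have hw_one : 1 ≤ √(1 + t) := Real.one_le_sqrt.mpr (by linarith)
  generalize √(1 + t) = w at hqw hw_sq hw_one
  have hle_pow : 1 + t * q⁻¹ ≤ w ^ 4 := by
    have hinv : q⁻¹ ≤ w := (inv_le_iff_one_le_mul₀' hq).mpr hqw
    calc 1 + t * q⁻¹ ≤ 1 + t * w ^ 2 := by
          gcongr
          nlinarith
      _ ≤ (w ^ 2) ^ 2 := by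
          rw [hw_sq]
          nlinarith
      _ = w ^ 4 := by ring
  have hlog : Real.log (1 + t * q⁻¹) ≤ 4 * (w - 1) := by
    have hmono := Real.log_le_log (by positivity) hle_pow
    rw [Real.log_pow] at hmono
    push_cast at hmono
    linarith [Real.log_le_sub_one_of_pos (by linarith : 0 < w)]
  have hfactor : t * q = (w - 1) * (q * w + q) := by
    rw [eq_sub_of_add_eq' hw_sq.symm]
    ring
  nlinarith [mul_nonneg (sub_nonneg.mpr hw_one) hq.le]

lemma mul_log_add_mul_log_le {M m s : ℝ} (hM : 0 < M) (hm : 0 < m) (hs : 0 < s)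
    (hms : m ≤ s / √(Real.log (1 + M / s))) :
    m * Real.log (1 + M / m) + M * Real.log (1 + m / M) ≤ 6 * (s * √(Real.log (1 + M / s))) := by
  have hr : 0 < M / s := div_pos hM hs
  have hlog : 0 < Real.log (1 + M / s) := Real.log_pos (by linarith)
  set q := √(Real.log (1 + M / s)) with hq
  have hq_pos : 0 < q := Real.sqrt_pos.mpr hlog
  have hfirst : m * Real.log (1 + M / m) ≤ 2 * (s * q) :=
    calc m * Real.log (1 + M / m) ≤ s / q * Real.log (1 + M / (s / q)) :=
          mul_log_one_add_div_le hm hms hM.le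
      _ = s / q * Real.log (1 + M / s * q) := by rw [div_div_eq_mul_div, mul_div_right_comm]
      _ ≤ s / q * (2 * Real.log (1 + M / s)) := by
          gcongr
          exact log_one_add_mul_sqrt_log_le hr.le
      _ = 2 * (s * q) := by
          rw [← Real.sq_sqrt hlog.le, ← hq]
          field_simp
  have hsecond : M * Real.log (1 + m / M) ≤ 4 * (s * q) :=
    calc M * Real.log (1 + m / M) ≤ M * Real.log (1 + s / q / M) := by gcongr
      _ = M * Real.log (1 + (M / s * q)⁻¹) := by
          rw [mul_inv, inv_div, ← div_eq_mul_inv, div_right_comm]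
      _ ≤ M * (4 * ((M / s)⁻¹ * q)) := by
          gcongr
          exact log_one_add_inv_mul_sqrt_log_le hr
      _ = 4 * (s * q) := by field_simp
  linarith

end GridEntropy

section AggregationRate

/-- The rate of convex aggregation of `M` estimators in dimension `n`. -/
def aggregationRate (n M : ℕ) : ℝ :=
  √(Real.log (1 + M / √n) / n)

variable {n M : ℕ}

lemma log_one_add_div_sqrt_pos (hn : n ≠ 0) (hM : M ≠ 0) : 0 < Real.log (1 + M / √n) := by
  have hratio : 0 < (M : ℝ) / √n := by positivity
  exact Real.log_pos (by linarith)

lemma aggregationRate_pos (hn : n ≠ 0) (hM : M ≠ 0) : 0 < aggregationRate n M :=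
  Real.sqrt_pos.mpr (div_pos (log_one_add_div_sqrt_pos hn hM) (Nat.cast_pos.mpr hn.bot_lt))

lemma aggregationRate_le_one (hn : n ≠ 0) (hM : (M : ℝ) ≤ √n * (Real.exp n - 1)) :
    aggregationRate n M ≤ 1 := by
  have hn' : (0 : ℝ) < n := Nat.cast_pos.mpr hn.bot_lt
  have hexp : 1 + M / √n ≤ Real.exp n := by
    linarith [(div_le_iff₀' (Real.sqrt_pos.mpr hn')).mpr hM]
  rw [aggregationRate, Real.sqrt_le_one, div_le_one hn']
  exact (Real.log_le_iff_le_exp (by positivity)).mpr hexp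

lemma sqrt_div_log_eq_inv_aggregationRate (n M : ℕ) :
    √(n / Real.log (1 + M / √n)) = (aggregationRate n M)⁻¹ := by
  rw [aggregationRate, ← Real.sqrt_inv, inv_div]

lemma floor_inv_ne_zero {δ : ℝ} (hδ : 0 < δ) (hδ' : δ ≤ 1) : ⌊δ⁻¹⌋₊ ≠ 0 :=
  Nat.one_le_iff_ne_zero.mp (Nat.floor_pos.mpr ((one_le_inv₀ hδ).mpr hδ'))

lemma inv_floor_inv_le_two_mul {δ : ℝ} (hδ : 0 < δ) (hδ' : δ ≤ 1) :
    (⌊δ⁻¹⌋₊ : ℝ)⁻¹ ≤ 2 * δ := by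
  have hone : (1 : ℝ) ≤ ⌊δ⁻¹⌋₊ := Nat.one_le_cast.mpr (floor_inv_ne_zero hδ hδ').bot_lt
  have hhalf : δ⁻¹ ≤ 2 * ⌊δ⁻¹⌋₊ := by linarith [Nat.lt_floor_add_one δ⁻¹]
  rw [inv_le_iff_one_le_mul₀ (by linarith)]
  calc 1 = δ * δ⁻¹ := (mul_inv_cancel₀ hδ.ne').symm
    _ ≤ δ * (2 * ⌊δ⁻¹⌋₊) := by gcongr
    _ = 2 * δ * ⌊δ⁻¹⌋₊ := by ring

lemma log_card_image_gridPoint_le (hn : n ≠ 0) (hM : M ≠ 0) {m : ℕ} (hm : m ≠ 0)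
    (hmδ : m ≤ (aggregationRate n M)⁻¹) :
    Real.log #(univ.image (gridPoint M m)) ≤ 6 * (n * aggregationRate n M) := by
  have : NeZero M := ⟨hM⟩
  have hM' : (0 : ℝ) < M := Nat.cast_pos.mpr hM.bot_lt
  have hm' : (0 : ℝ) < m := Nat.cast_pos.mpr hm.bot_lt
  have hs : 0 < √(n : ℝ) := Real.sqrt_pos.mpr (Nat.cast_pos.mpr hn.bot_lt)
  have hrate : aggregationRate n M = √(Real.log (1 + M / √n)) / √n :=
    Real.sqrt_div' _ n.cast_nonneg
  rw [hrate, inv_div] at hmδ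
  have hcard : (0 : ℝ) < #(univ.image (gridPoint M m)) :=
    Nat.cast_pos.mpr (univ_nonempty.image _).card_pos
  calc Real.log #(univ.image (gridPoint M m)) ≤ Real.log ((M + m).choose m) :=
        Real.log_le_log hcard (Nat.cast_le.mpr (card_image_gridPoint_le M m))
    _ ≤ m * Real.log (1 + M / m) + M * Real.log (1 + m / M) := log_choose_le hM hm
    _ ≤ 6 * (√n * √(Real.log (1 + M / √n))) := mul_log_add_mul_log_le hM' hm' hs hmδ
    _ = 6 * (n * aggregationRate n M) := by
        rw [hrate]
        nth_rewrite 3 [← Real.mul_self_sqrt n.cast_nonneg]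
        field_simp

end AggregationRate

section GridAggregation

variable {M m : ℕ} {E : Type*} [NormedAddCommGroup E] [InnerProductSpace ℝ E]
  {T : Fin M → E →L[ℝ] E} {β : Fin M → E} {θ : Fin M → ℝ} {f ξ : E} {D : ℝ}

lemma gridPoint_mem_stdSimplex (hm : m ≠ 0) (u : Fin m → Fin M) :
    gridPoint M m u ∈ stdSimplex ℝ (Fin M) := by
  refine ⟨fun j => by unfold gridPoint; positivity, ?_⟩
  simp_rw [gridPoint, ← sum_div]
  rw [sum_comm]
  simp [hm]

lemma affineMixture_gridPoint (T : Fin M → E →L[ℝ] E) (β : Fin M → E) (u : Fin m → Fin M) (y : E) :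
    affineMixture T β (gridPoint M m u) y = (m : ℝ)⁻¹ • ∑ q, (T (u q) y + β (u q)) := by
  simp_rw [affineMixture, gridPoint, div_eq_inv_mul, mul_smul, ← smul_sum, sum_smul]
  rw [sum_comm]
  simp only [ite_smul, one_smul, zero_smul, sum_ite_eq, mem_univ, if_true]

lemma exists_norm_affineMixture_gridPoint_sub_sq_le (hT : ∀ j, ‖T j‖ ≤ 1) (hf : ‖f‖ ^ 2 ≤ D)
    (hβ : ∀ j, ‖β j‖ ^ 2 ≤ D) (hm : m ≠ 0) (hθ : θ ∈ stdSimplex ℝ (Fin M)) :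
    ∃ u, ‖affineMixture T β (gridPoint M m u) (f + ξ) - f‖ ^ 2 ≤
      ‖affineMixture T β θ (f + ξ) - f‖ ^ 2 + 3 * (2 * D + ‖ξ‖ ^ 2) / m := by
  have hvertex (j : Fin M) : ‖T j (f + ξ) + β j‖ ^ 2 ≤ 3 * (2 * D + ‖ξ‖ ^ 2) := by
    linarith [norm_apply_add_sq_le (hT j) f ξ (β j), hβ j]
  obtain ⟨u, hu⟩ := exists_norm_average_sub_sq_le hθ (fun j => T j (f + ξ) + β j) f hm
  refine ⟨u, ?_⟩
  rw [affineMixture_gridPoint]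
  exact hu.trans (by gcongr; exacts [le_rfl, dispersion_le hθ hvertex])

lemma norm_gridAggregate_sub_sq_le {σ x : ℝ} {w : (Fin m → Fin M) → ℝ} (hT : ∀ j, ‖T j‖ ≤ 1)
    (hf : ‖f‖ ^ 2 ≤ D) (hβ : ∀ j, ‖β j‖ ^ 2 ≤ D) (hm : m ≠ 0)
    (hξ : ξ ∈ typicalNoise T β f σ (univ.image (gridPoint M m)) x)
    (hw : w ∈ stdSimplex ℝ (Fin m → Fin M))
    (hmin : ∀ w' ∈ stdSimplex ℝ (Fin m → Fin M),
      penalizedCriterion (fun u => affineMixture T β (gridPoint M m u) (f + ξ))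
          (fun u => 2 * σ ^ 2 * ∑ j, gridPoint M m u j * LinearMap.trace ℝ E (T j)) (f + ξ) w ≤
        penalizedCriterion (fun u => affineMixture T β (gridPoint M m u) (f + ξ))
          (fun u => 2 * σ ^ 2 * ∑ j, gridPoint M m u j * LinearMap.trace ℝ E (T j)) (f + ξ) w')
    (hθ : θ ∈ stdSimplex ℝ (Fin M)) :
    ‖∑ u, w u • affineMixture T β (gridPoint M m u) (f + ξ) - f‖ ^ 2 ≤
      ‖affineMixture T β θ (f + ξ) - f‖ ^ 2 +
        (3 * (2 * D + σ ^ 2 * (4 * x + 3 / 2 * Module.finrank ℝ E)) / m +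
          40 * σ ^ 2 * (x + 2 * Real.log #(univ.image (gridPoint M m)))) := by
  obtain ⟨k, hk⟩ := exists_norm_affineMixture_gridPoint_sub_sq_le (ξ := ξ) hT hf hβ hm hθ
  have hnoise : 3 * (2 * D + ‖ξ‖ ^ 2) / m ≤
      3 * (2 * D + σ ^ 2 * (4 * x + 3 / 2 * Module.finrank ℝ E)) / m := by
    gcongr
    exact hξ.2
  linarith [norm_aggregate_affineMixture_sub_sq_le
    (fun u => mem_image_of_mem (gridPoint M m) (mem_univ u)) hξ hw hmin k]

end GridAggregation

section EuclideanForm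

variable {n M m : ℕ}

lemma sqNorm_eq_norm_sq (v : Fin n → ℝ) : sqNorm v = ‖WithLp.toLp 2 v‖ ^ 2 :=
  (EuclideanSpace.real_norm_sq_eq _).symm

lemma opNorm_eq_norm_toEuclideanCLM (A : Matrix (Fin n) (Fin n) ℝ) :
    opNorm A = ‖Matrix.toEuclideanCLM (𝕜 := ℝ) A‖ := by
  rw [← ContinuousLinearMap.sSup_unitClosedBall_eq_norm, opNorm]
  congr 1
  ext c
  constructor
  · rintro ⟨v, hv, rfl⟩
    rw [sqNorm_eq_norm_sq, sq_le_one_iff₀ (norm_nonneg _)] at hv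
    refine ⟨WithLp.toLp 2 v, mem_closedBall_zero_iff.mpr hv, ?_⟩
    simp only [sqNorm_eq_norm_sq, Real.sqrt_sq (norm_nonneg _), Matrix.toEuclideanCLM_toLp]
  · rintro ⟨v, hv, rfl⟩
    refine ⟨WithLp.ofLp v, ?_, ?_⟩
    · rw [sqNorm_eq_norm_sq, sq_le_one_iff₀ (norm_nonneg _)]
      exact mem_closedBall_zero_iff.mp hv
    · rw [sqNorm_eq_norm_sq, Real.sqrt_sq (norm_nonneg _), ← Matrix.toEuclideanCLM_toLp]

lemma trace_toEuclideanCLM (A : Matrix (Fin n) (Fin n) ℝ) :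
    LinearMap.trace ℝ (EuclideanSpace ℝ (Fin n)) (Matrix.toEuclideanCLM (𝕜 := ℝ) A) = A.trace := by
  rw [Matrix.coe_toEuclideanCLM_eq_toEuclideanLin, Matrix.toEuclideanLin_eq_toLin_orthonormal,
    Matrix.trace_toLin_eq]

lemma toLp_muV (A : Fin M → Matrix (Fin n) (Fin n) ℝ) (b : Fin M → Fin n → ℝ) (y : Fin n → ℝ)
    (θ : Fin M → ℝ) :
    WithLp.toLp 2 (muV A b y θ) = affineMixture (fun j => Matrix.toEuclideanCLM (𝕜 := ℝ) (A j))
      (fun j => WithLp.toLp 2 (b j)) θ (WithLp.toLp 2 y) := by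
  simp_rw [muV, affineMixture, WithLp.toLp_sum, WithLp.toLp_smul, WithLp.toLp_add,
    Matrix.toEuclideanCLM_toLp]

lemma toLp_nuGrid (A : Fin M → Matrix (Fin n) (Fin n) ℝ) (b : Fin M → Fin n → ℝ) (y : Fin n → ℝ)
    (w : (Fin m → Fin M) → ℝ) :
    WithLp.toLp 2 (nuGrid A b y w) =
      ∑ u, w u • affineMixture (fun j => Matrix.toEuclideanCLM (𝕜 := ℝ) (A j))
        (fun j => WithLp.toLp 2 (b j)) (gridPoint M m u) (WithLp.toLp 2 y) := by
  simp_rw [nuGrid, WithLp.toLp_sum, WithLp.toLp_smul, toLp_muV]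

lemma hpenGrid_eq_penalizedCriterion (A : Fin M → Matrix (Fin n) (Fin n) ℝ) (b : Fin M → Fin n → ℝ)
    (σ : ℝ) (y : Fin n → ℝ) (w : (Fin m → Fin M) → ℝ) :
    HpenGrid A b σ y w =
      penalizedCriterion
        (fun u => affineMixture (fun j => Matrix.toEuclideanCLM (𝕜 := ℝ) (A j))
          (fun j => WithLp.toLp 2 (b j)) (gridPoint M m u) (WithLp.toLp 2 y))
        (fun u => 2 * σ ^ 2 * ∑ j, gridPoint M m u j *
          LinearMap.trace ℝ (EuclideanSpace ℝ (Fin n)) (Matrix.toEuclideanCLM (𝕜 := ℝ) (A j)))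
        (WithLp.toLp 2 y) w := by
  have hinner : ∑ i, y i * nuGrid A b y w i =
      ⟪WithLp.toLp 2 y, WithLp.toLp 2 (nuGrid A b y w)⟫ := by
    simp [PiLp.inner_apply, mul_comm]
  simp_rw [HpenGrid, penalizedCriterion, dispersion, ← toLp_nuGrid, ← toLp_muV, hinner,
    trace_toEuclideanCLM, sqNorm_eq_norm_sq, WithLp.toLp_sub,
    norm_sub_rev (WithLp.toLp 2 (nuGrid _ _ _ _)), mul_left_comm (w _), ← mul_sum]
  ring

lemma map_toLp_gaussPi (n : ℕ) (σ : ℝ) :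
    (gaussPi n σ).map (WithLp.toLp 2) =
      (stdGaussian (EuclideanSpace ℝ (Fin n))).map fun z => σ • z := by
  have hscale : gaussPi n σ =
      (Measure.pi fun _ : Fin n => gaussianReal 0 1).map fun z i => σ * z i := by
    rw [Measure.pi_map_pi (f := fun _ t => σ * t) fun _ => by fun_prop, gaussPi]
    simp_rw [gaussianReal_map_const_mul, mul_zero, mul_one]
    rfl
  rw [hscale, ← map_pi_eq_stdGaussian, Measure.map_map (by fun_prop) (by fun_prop),
    Measure.map_map (by fun_prop) (by fun_prop)]
  rfl

lemma ofReal_one_sub_le_measure_typicalNoise {Ω : Type*} [MeasurableSpace Ω] {P : Measure Ω}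
    [IsProbabilityMeasure P] {σ : ℝ} {ξ : Ω → Fin n → ℝ} (hξ : Measurable ξ)
    (hlaw : P.map ξ = gaussPi n σ)
    {T : Fin M → EuclideanSpace ℝ (Fin n) →L[ℝ] EuclideanSpace ℝ (Fin n)}
    (hT : ∀ j, ‖T j‖ ≤ 1) (β : Fin M → EuclideanSpace ℝ (Fin n)) (f : EuclideanSpace ℝ (Fin n))
    {G : Finset (Fin M → ℝ)} (hG : ∀ θ ∈ G, θ ∈ stdSimplex ℝ (Fin M)) (x : ℝ) :
    ENNReal.ofReal (1 - 2 * Real.exp (-x)) ≤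
      P {ω | WithLp.toLp 2 (ξ ω) ∈ typicalNoise T β f σ G x} := by
  have hmeas : MeasurableSet (typicalNoise T β f σ G x) := measurableSet_typicalNoise σ G x
  have htransfer : P {ω | WithLp.toLp 2 (ξ ω) ∈ typicalNoise T β f σ G x} =
      stdGaussian (EuclideanSpace ℝ (Fin n)) {z | σ • z ∈ typicalNoise T β f σ G x} :=
    calc P {ω | WithLp.toLp 2 (ξ ω) ∈ typicalNoise T β f σ G x}
        = (P.map ξ).map (WithLp.toLp 2) (typicalNoise T β f σ G x) := by
          rw [Measure.map_apply (by fun_prop) hmeas,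
            Measure.map_apply hξ (hmeas.preimage (by fun_prop))]
          rfl
      _ = stdGaussian (EuclideanSpace ℝ (Fin n)) {z | σ • z ∈ typicalNoise T β f σ G x} := by
          rw [hlaw, map_toLp_gaussPi, Measure.map_apply (by fun_prop) hmeas]
          rfl
  have hset : MeasurableSet {z | σ • z ∉ typicalNoise T β f σ G x} :=
    hmeas.compl.preimage (by fun_prop)
  calc ENNReal.ofReal (1 - 2 * Real.exp (-x))
      ≤ 1 - stdGaussian (EuclideanSpace ℝ (Fin n)) {z | σ • z ∉ typicalNoise T β f σ G x} := by
        rw [ENNReal.ofReal_sub _ (by positivity), ENNReal.ofReal_one]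
        exact tsub_le_tsub_left (stdGaussian_smul_notMem_typicalNoise_le hT hG σ x) 1
    _ = P {ω | WithLp.toLp 2 (ξ ω) ∈ typicalNoise T β f σ G x} := by
        rw [← prob_compl_eq_one_sub hset, htransfer, Set.compl_ofPred]
        simp only [not_not]

end EuclideanForm

section OracleInequality

lemma gridRemainder_le {N R σ x δ ρ ℓ : ℝ} (hN : 0 < N) (hx : 0 ≤ x) (hρ : 0 ≤ ρ) (hρ_one : ρ ≤ 1)
    (hρδ : ρ ≤ 2 * δ) (hℓ : ℓ ≤ 6 * (N * δ)) :
    1 / N * (3 * (2 * (N * R ^ 2) + σ ^ 2 * (4 * x + 3 / 2 * N)) * ρ +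
        40 * σ ^ 2 * (x + 2 * ℓ)) ≤
      501 * max (R ^ 2) (σ ^ 2) * δ + 501 * σ ^ 2 * x / N := by
  have hδ : 0 ≤ δ := by linarith
  have hR := le_max_left (R ^ 2) (σ ^ 2)
  have hσ := le_max_right (R ^ 2) (σ ^ 2)
  set κ := max (R ^ 2) (σ ^ 2)
  have hbias : (2 * R ^ 2 + 3 / 2 * σ ^ 2) * ρ ≤ 7 / 2 * κ * (2 * δ) := by
    gcongr
    linarith
  have hconfidence : σ ^ 2 * x / N * ρ ≤ σ ^ 2 * x / N :=
    mul_le_of_le_one_right (by positivity) hρ_one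
  have hentropy : σ ^ 2 * (ℓ / N) ≤ κ * (6 * δ) :=
    calc σ ^ 2 * (ℓ / N) ≤ σ ^ 2 * (6 * δ) := by
          gcongr
          rw [div_le_iff₀ hN]
          linarith
      _ ≤ κ * (6 * δ) := by gcongr
  have hnonneg : 0 ≤ σ ^ 2 * x / N := by positivity
  calc 1 / N * (3 * (2 * (N * R ^ 2) + σ ^ 2 * (4 * x + 3 / 2 * N)) * ρ +
        40 * σ ^ 2 * (x + 2 * ℓ))
      = 3 * ((2 * R ^ 2 + 3 / 2 * σ ^ 2) * ρ) + 12 * (σ ^ 2 * x / N * ρ) +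
          40 * (σ ^ 2 * x / N) + 80 * (σ ^ 2 * (ℓ / N)) := by
        field_simp
        ring
    _ ≤ 501 * κ * δ + 501 * (σ ^ 2 * x / N) := by linarith
    _ = 501 * κ * δ + 501 * σ ^ 2 * x / N := by ring

lemma sqNorm_nuGrid_sub_le {n M m : ℕ} (hn : n ≠ 0) (hM : M ≠ 0)
    (hM_exp : (M : ℝ) ≤ √n * (Real.exp n - 1)) {σ R x : ℝ} (hx : 0 ≤ x) {f ξ : Fin n → ℝ}
    {A : Fin M → Matrix (Fin n) (Fin n) ℝ} {b : Fin M → Fin n → ℝ}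
    (hf : 1 / n * sqNorm f ≤ R ^ 2) (hb : ∀ j, 1 / n * sqNorm (b j) ≤ R ^ 2)
    (hA : ∀ j, opNorm (A j) ≤ 1) (hm : m = ⌊(aggregationRate n M)⁻¹⌋₊)
    (hξ : WithLp.toLp 2 ξ ∈ typicalNoise (fun j => Matrix.toEuclideanCLM (𝕜 := ℝ) (A j))
      (fun j => WithLp.toLp 2 (b j)) (WithLp.toLp 2 f) σ (univ.image (gridPoint M m)) x)
    {w : (Fin m → Fin M) → ℝ} (hw : w ∈ simplexGrid M m)
    (hmin : ∀ w' ∈ simplexGrid M m, HpenGrid A b σ (f + ξ) w ≤ HpenGrid A b σ (f + ξ) w')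
    {θ : Fin M → ℝ} (hθ : θ ∈ simplex M) :
    1 / n * sqNorm (nuGrid A b (f + ξ) w - f) ≤
      1 / n * sqNorm (muV A b (f + ξ) θ - f) +
        501 * max (R ^ 2) (σ ^ 2) * aggregationRate n M + 501 * σ ^ 2 * x / n := by
  have hn' : (0 : ℝ) < n := Nat.cast_pos.mpr hn.bot_lt
  have hδ := aggregationRate_pos hn hM
  have hδ_one := aggregationRate_le_one hn hM_exp
  have hm_ne : m ≠ 0 := hm ▸ floor_inv_ne_zero hδ hδ_one
  have hm_inv : (m : ℝ)⁻¹ ≤ 2 * aggregationRate n M := hm ▸ inv_floor_inv_le_two_mul hδ hδ_one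
  have hm_le : (m : ℝ) ≤ (aggregationRate n M)⁻¹ := hm ▸ Nat.floor_le (inv_nonneg.mpr hδ.le)
  have hscale {v : Fin n → ℝ} (hv : 1 / n * sqNorm v ≤ R ^ 2) :
      ‖WithLp.toLp 2 v‖ ^ 2 ≤ n * R ^ 2 := by
    rwa [← sqNorm_eq_norm_sq, ← div_le_iff₀' hn', ← one_div_mul_eq_div]
  simp_rw [opNorm_eq_norm_toEuclideanCLM] at hA
  simp_rw [hpenGrid_eq_penalizedCriterion, WithLp.toLp_add] at hmin
  have hrisk := norm_gridAggregate_sub_sq_le hA (hscale hf) (fun j => hscale (hb j)) hm_ne hξ hw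
    hmin hθ
  rw [← WithLp.toLp_add, ← toLp_nuGrid, ← toLp_muV, ← WithLp.toLp_sub, ← WithLp.toLp_sub,
    ← sqNorm_eq_norm_sq, ← sqNorm_eq_norm_sq, finrank_euclideanSpace_fin, div_eq_mul_inv] at hrisk
  have hremainder := gridRemainder_le (R := R) (σ := σ) hn' hx (by positivity)
    (Nat.cast_inv_le_one m) hm_inv (log_card_image_gridPoint_le hn hM hm_ne hm_le)
  calc 1 / n * sqNorm (nuGrid A b (f + ξ) w - f) ≤ _ := by gcongr
    _ = _ := mul_add _ _ _
    _ ≤ _ := by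
        rw [add_assoc]
        gcongr

end OracleInequality

/-- **Proposition 7.2, inequality \eqref{eq:soi-simplex-m}**: aggregation over the
grid `Λ^M_m` mimics the best convex combination at the optimal rate. -/
theorem convex_oracle_grid :
    ∃ C : ℝ, 0 < C ∧
      ∀ (n M : ℕ), 1 ≤ n → 1 ≤ M →
        (M : ℝ) ≤ Real.sqrt n * (Real.exp n - 1) →
      ∀ (σ : ℝ) (f : Fin n → ℝ)
        (A : Fin M → Matrix (Fin n) (Fin n) ℝ) (b : Fin M → Fin n → ℝ)
        (R : ℝ), 0 < R →
        (1 / n : ℝ) * sqNorm f ≤ R ^ 2 →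
        (∀ j, (1 / n : ℝ) * sqNorm (b j) ≤ R ^ 2) →
        (∀ j, opNorm (A j) ≤ 1) →
      ∀ m : ℕ, m = Nat.floor (Real.sqrt ((n : ℝ) / Real.log (1 + M / Real.sqrt n))) →
      ∀ (Ω : Type) (_ : MeasurableSpace Ω) (P : Measure Ω),
        IsProbabilityMeasure P →
      ∀ (ξ : Ω → Fin n → ℝ), Measurable ξ → P.map ξ = gaussPi n σ →
      ∀ (lamhat : Ω → (Fin m → Fin M) → ℝ),
        (∀ ω, lamhat ω ∈ simplexGrid M m) →
        (∀ ω, ∀ lam ∈ simplexGrid M m,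
          HpenGrid A b σ (f + ξ ω) (lamhat ω) ≤ HpenGrid A b σ (f + ξ ω) lam) →
      ∀ x : ℝ, 0 < x →
        ENNReal.ofReal (1 - 3 * Real.exp (-x)) ≤
          P {ω | ∀ θ ∈ simplex M,
              (1 / n : ℝ) * sqNorm (nuGrid A b (f + ξ ω) (lamhat ω) - f) ≤
                (1 / n : ℝ) * sqNorm (muV A b (f + ξ ω) θ - f)
                  + C * max (R ^ 2) (σ ^ 2)
                      * Real.sqrt (Real.log (1 + M / Real.sqrt n) / n)
                  + C * σ ^ 2 * x / n} := by
  refine ⟨501, by norm_num, fun n M hn hM hM_exp σ f A b R _ hf hb hA m hm Ω _ P _ ξ hξ hlaw lamhat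
    hlam hmin x hx => ?_⟩
  have hn : n ≠ 0 := Nat.one_le_iff_ne_zero.mp hn
  have hM : M ≠ 0 := Nat.one_le_iff_ne_zero.mp hM
  rw [sqrt_div_log_eq_inv_aggregationRate] at hm
  have hm_ne : m ≠ 0 :=
    hm ▸ floor_inv_ne_zero (aggregationRate_pos hn hM) (aggregationRate_le_one hn hM_exp)
  have hG : ∀ θ ∈ univ.image (gridPoint M m), θ ∈ stdSimplex ℝ (Fin M) :=
    forall_mem_image.mpr fun u _ => gridPoint_mem_stdSimplex hm_ne u
  have hT (j : Fin M) : ‖Matrix.toEuclideanCLM (𝕜 := ℝ) (A j)‖ ≤ 1 :=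
    (opNorm_eq_norm_toEuclideanCLM (A j)).ge.trans (hA j)
  have hweaken : 1 - 3 * Real.exp (-x) ≤ 1 - 2 * Real.exp (-x) := by linarith [Real.exp_pos (-x)]
  refine (ENNReal.ofReal_le_ofReal hweaken).trans <|
    (ofReal_one_sub_le_measure_typicalNoise hξ hlaw hT (fun j => WithLp.toLp 2 (b j))
      (WithLp.toLp 2 f) hG x).trans <| measure_mono fun ω hω => ?_
  exact fun θ hθ =>
    sqNorm_nuGrid_sub_le hn hM hM_exp hx.le hf hb hA hm hω (hlam ω) (hmin ω) hθ

end
end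

section
/- Let A and B be two n×n real matrices satisfying A = Aᵀ = A² and B = Bᵀ = B² (orthogonal projection matrices). Then |Tr(A − B)| ≤ ‖A − B‖_F², where ‖·‖_F is the Frobenius norm. -/
open Finset

noncomputable section

/-- Frobenius (Hilbert–Schmidt) norm squared of a square matrix. -/
def frobSq {n : ℕ} (A : Matrix (Fin n) (Fin n) ℝ) : ℝ := ∑ i, ∑ j, (A i j) ^ 2

/-!
For projections `A` and `B`, expanding the square and using `tr (A * B) = tr (B * A)` gives
`‖A - B‖² - tr (A - B) = 2 tr (B * (1 - A))`. The right side is nonnegative because `B` and `1 - A`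
are both projections. Exchanging `A` and `B` bounds `-tr (A - B)`.
-/

section Trace

open scoped Matrix

variable {ι R : Type*} [Fintype ι] [CommRing R]

theorem trace_sub_mul_self_sub_trace_sub_of_isIdempotentElem [DecidableEq ι] {A B : Matrix ι ι R}
    (hA : IsIdempotentElem A) (hB : IsIdempotentElem B) :
    ((A - B) * (A - B)).trace - (A - B).trace = 2 * (B * (1 - A)).trace := by
  have expand_sq : (A - B) * (A - B) = A - A * B - B * A + B := by
    rw [sub_mul, mul_sub, mul_sub, hA.eq, hB.eq]
    abel
  rw [expand_sq, mul_sub, mul_one]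
  simp only [Matrix.trace_add, Matrix.trace_sub, Matrix.trace_mul_comm A B]
  ring

variable [PartialOrder R] [StarRing R] [StarOrderedRing R]

theorem trace_mul_nonneg_of_isStarProjection {A B : Matrix ι ι R}
    (hA : IsStarProjection A) (hB : IsStarProjection B) : 0 ≤ (A * B).trace := by
  have trace_eq : ((A * B)ᴴ * (A * B)).trace = (A * B).trace := by
    calc ((A * B)ᴴ * (A * B)).trace
        = (B * A * (A * B)).trace := by
          rw [← Matrix.star_eq_conjTranspose, star_mul, hA.isSelfAdjoint.star_eq,
            hB.isSelfAdjoint.star_eq]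
      _ = (A * A * (B * B)).trace := by
          rw [Matrix.mul_assoc, Matrix.trace_mul_comm]
          simp only [Matrix.mul_assoc]
      _ = (A * B).trace := by rw [hA.isIdempotentElem.eq, hB.isIdempotentElem.eq]
  rw [← trace_eq]
  exact (Matrix.posSemidef_conjTranspose_mul_self (A * B)).trace_nonneg

theorem trace_sub_le_trace_sub_mul_self_of_isStarProjection {A B : Matrix ι ι R}
    (hA : IsStarProjection A) (hB : IsStarProjection B) :
    (A - B).trace ≤ ((A - B) * (A - B)).trace := by
  classical
  rw [← sub_nonneg, trace_sub_mul_self_sub_trace_sub_of_isIdempotentElem hA.isIdempotentElem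
    hB.isIdempotentElem, two_mul]
  have trace_nonneg := trace_mul_nonneg_of_isStarProjection hB hA.one_sub
  exact add_nonneg trace_nonneg trace_nonneg

end Trace

section Frobenius

open scoped Matrix Matrix.Norms.Frobenius ComplexOrder

theorem frobenius_norm_sq_eq_sum {m n α : Type*} [Fintype m] [Fintype n]
    [SeminormedAddCommGroup α] (M : Matrix m n α) : ‖M‖ ^ 2 = ∑ i, ∑ j, ‖M i j‖ ^ 2 := by
  rw [Matrix.frobenius_norm_def, ← Real.sqrt_eq_rpow, Real.sq_sqrt (by positivity)]
  simp only [Real.rpow_two]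

theorem frobSq_eq_frobenius_norm_sq {n : ℕ} (M : Matrix (Fin n) (Fin n) ℝ) :
    frobSq M = ‖M‖ ^ 2 := by
  simp only [frobSq, frobenius_norm_sq_eq_sum, Real.norm_eq_abs, sq_abs]

variable {𝕜 : Type*} [RCLike 𝕜]

theorem trace_mul_conjTranspose_self_eq_frobenius_norm_sq {m n : Type*} [Fintype m] [Fintype n]
    (M : Matrix m n 𝕜) : (M * Mᴴ).trace = ((‖M‖ ^ 2 : ℝ) : 𝕜) := by
  simp [frobenius_norm_sq_eq_sum, Matrix.trace, Matrix.mul_apply, RCLike.mul_conj]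

theorem norm_le_of_le_ofReal_of_neg_le_ofReal {z : 𝕜} {r : ℝ} (hz : z ≤ r) (hz_neg : -z ≤ r) :
    ‖z‖ ≤ r := by
  obtain ⟨re_le, im_eq⟩ := RCLike.le_iff_re_im.mp hz
  have neg_re_le := (RCLike.le_iff_re_im.mp hz_neg).1
  simp only [map_neg, RCLike.ofReal_re, RCLike.ofReal_im] at re_le im_eq neg_re_le
  have re_eq_self : (RCLike.re z : 𝕜) = z :=
    RCLike.conj_eq_iff_re.mp (RCLike.conj_eq_iff_im.mpr im_eq)
  rw [← re_eq_self, RCLike.norm_ofReal]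
  exact abs_le'.mpr ⟨re_le, neg_re_le⟩

variable {ι : Type*} [Fintype ι]

theorem trace_sub_le_frobenius_norm_sq_of_isStarProjection {A B : Matrix ι ι 𝕜}
    (hA : IsStarProjection A) (hB : IsStarProjection B) :
    (A - B).trace ≤ ((‖A - B‖ ^ 2 : ℝ) : 𝕜) := by
  have sub_selfAdjoint : (A - B)ᴴ = A - B := (hA.isSelfAdjoint.sub hB.isSelfAdjoint).star_eq
  calc (A - B).trace
      ≤ ((A - B) * (A - B)).trace := trace_sub_le_trace_sub_mul_self_of_isStarProjection hA hB
    _ = ((A - B) * (A - B)ᴴ).trace := by rw [sub_selfAdjoint]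
    _ = ((‖A - B‖ ^ 2 : ℝ) : 𝕜) := trace_mul_conjTranspose_self_eq_frobenius_norm_sq (A - B)

theorem trace_diff_le_frobSq_of_projections_general {A B : Matrix ι ι 𝕜}
    (hA : IsStarProjection A) (hB : IsStarProjection B) : ‖(A - B).trace‖ ≤ ‖A - B‖ ^ 2 := by
  refine norm_le_of_le_ofReal_of_neg_le_ofReal
    (trace_sub_le_frobenius_norm_sq_of_isStarProjection hA hB) ?_
  rw [← Matrix.trace_neg, neg_sub, norm_sub_rev]
  exact trace_sub_le_frobenius_norm_sq_of_isStarProjection hB hA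

end Frobenius

/-- **Lemma 8.2**: for two orthogonal projection matrices `A, B`,
`|Tr(A - B)| ≤ ‖A - B‖_F²`. -/
theorem trace_diff_le_frobSq_of_projections
    {n : ℕ} (A B : Matrix (Fin n) (Fin n) ℝ)
    (hAsymm : Matrix.transpose A = A) (hAidem : A * A = A)
    (hBsymm : Matrix.transpose B = B) (hBidem : B * B = B) :
    |(A - B).trace| ≤ frobSq (A - B) := by
  rw [frobSq_eq_frobenius_norm_sq]
  exact trace_diff_le_frobSq_of_projections_general ⟨hAidem, hAsymm⟩ ⟨hBidem, hBsymm⟩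

end
end

section
/- Let m ≥ 1 and Λ^M_m = { (1/m)Σ_{q=1}^m u_q : u_1,…,u_m ∈ {e_1,…,e_M} } ⊂ Λ^M. Let Q(θ) = θᵀΣθ + vᵀθ + a for some positive semi-definite M×M matrix Σ, v ∈ R^M and a ∈ R. Then min_{θ∈Λ^M_m} Q(θ) ≤ min_{θ∈Λ^M} Q(θ) + 4 max_{j=1,…,M} Σ_{jj} / m. -/
open Finset

noncomputable section

/-!
Centre the vertices: `d j = e_j - θ` has `θ`-average `0`. Hence the `θ`-average over `j` of
`Q (y + t • d j)` is `Q y + t ^ 2 * ∑ j, θ j * q (d j)`, where `q` is the homogeneous part of `Q`: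
the linear terms cancel. Some `j` does at least as well as the average, so `m` successive greedy
choices with step `t = 1 / m`, starting from `θ`, lead to a grid point at a total cost of `1 / m`
times the variance `∑ j, θ j * q (d j)`.
-/

section QuadraticFunction

variable {R E ι : Type*} [CommRing R] [AddCommGroup E] [Module R E]

/-- The inhomogeneous quadratic function with homogeneous part `q`, linear part `l` and constant
term `a`; the functional `Q` of the theorem is of this form on `Fin M → ℝ`. -/
def quadraticFun (q : QuadraticForm R E) (l : E →ₗ[R] R) (a : R) (y : E) : R :=
  q y + l y + a

variable (q : QuadraticForm R E) (l : E →ₗ[R] R) (a : R)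

lemma quadraticFun_add_smul (y d : E) (t : R) :
    quadraticFun q l a (y + t • d) =
      quadraticFun q l a y + t * (q.polarBilin y + l) d + t ^ 2 * q d := by
  simp only [quadraticFun, QuadraticMap.map_add q, QuadraticMap.map_smul,
    QuadraticMap.polar_smul_right, map_add, map_smul, LinearMap.add_apply,
    QuadraticMap.polarBilin_apply_apply, smul_eq_mul]
  ring

variable [Fintype ι] {w : ι → R}

lemma sum_mul_quadraticFun_add_smul (hw : ∑ j, w j = 1) {d : ι → E} (hd : ∑ j, w j • d j = 0)
    (y : E) (t : R) :
    ∑ j, w j * quadraticFun q l a (y + t • d j) =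
      quadraticFun q l a y + t ^ 2 * ∑ j, w j * q (d j) := by
  have linear_part_eq_zero : ∑ j, w j * (q.polarBilin y + l) (d j) = 0 := by
    simpa only [map_sum, map_smul, smul_eq_mul, map_zero] using
      congrArg (q.polarBilin y + l) hd
  calc ∑ j, w j * quadraticFun q l a (y + t • d j)
      = (∑ j, w j) * quadraticFun q l a y + t * ∑ j, w j * (q.polarBilin y + l) (d j)
          + t ^ 2 * ∑ j, w j * q (d j) := by
        simp only [quadraticFun_add_smul, sum_mul, mul_sum, ← sum_add_distrib]
        exact sum_congr rfl fun j _ ↦ by ring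
    _ = quadraticFun q l a y + t ^ 2 * ∑ j, w j * q (d j) := by
        rw [hw, linear_part_eq_zero]; ring

lemma sum_smul_sub_sum_smul (hw : ∑ j, w j = 1) (x : ι → E) :
    ∑ j, w j • (x j - ∑ i, w i • x i) = 0 := by
  simp only [smul_sub, sum_sub_distrib, ← sum_smul, hw, one_smul, sub_self]

lemma sum_mul_map_sub_sum_smul (hw : ∑ j, w j = 1) (x : ι → E) :
    ∑ j, w j * q (x j - ∑ i, w i • x i) = ∑ j, w j * q (x j) - q (∑ j, w j • x j) := by
  have expansion := sum_mul_quadraticFun_add_smul q 0 0 hw (sum_smul_sub_sum_smul hw x)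
    (∑ i, w i • x i) 1
  simp only [quadraticFun, one_smul, add_sub_cancel, LinearMap.zero_apply, add_zero, one_pow,
    one_mul] at expansion
  rw [expansion, add_sub_cancel_left]

variable {q} in
lemma sum_mul_map_sub_map_sum_smul_le [PartialOrder R] [IsOrderedRing R]
    (hw : w ∈ stdSimplex R ι) {x : ι → E} (hq : 0 ≤ q (∑ j, w j • x j)) {D : R}
    (hD : ∀ j, q (x j) ≤ D) :
    ∑ j, w j * q (x j) - q (∑ j, w j • x j) ≤ D :=
  calc ∑ j, w j * q (x j) - q (∑ j, w j • x j)
      ≤ ∑ j, w j * q (x j) := sub_le_self _ hq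
    _ ≤ ∑ j, w j * D := sum_le_sum fun j _ ↦ mul_le_mul_of_nonneg_left (hD j) (hw.1 j)
    _ = D := by rw [← sum_mul, hw.2, one_mul]

end QuadraticFunction

section Greedy

variable {𝕜 E ι : Type*} [Field 𝕜] [LinearOrder 𝕜] [IsStrictOrderedRing 𝕜]
  [AddCommGroup E] [Module 𝕜 E] [Fintype ι] {w : ι → 𝕜}

lemma exists_le_sum_mul_of_mem_stdSimplex (hw : w ∈ stdSimplex 𝕜 ι) (f : ι → 𝕜) :
    ∃ j, f j ≤ ∑ i, w i * f i := by
  obtain ⟨j, -, hj⟩ := (concaveOn_id (𝕜 := 𝕜) convex_univ).exists_le_of_centerMass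
    (t := univ) (p := f) (fun i _ ↦ hw.1 i) (hw.2 ▸ zero_lt_one) fun _ _ ↦ Set.mem_univ _
  exact ⟨j, by simpa only [id, centerMass_eq_of_sum_1 _ _ hw.2, smul_eq_mul] using hj⟩

variable (q : QuadraticForm 𝕜 E) (l : E →ₗ[𝕜] 𝕜) (a : 𝕜)

lemma exists_quadraticFun_add_smul_sum_le (hw : w ∈ stdSimplex 𝕜 ι) {d : ι → E}
    (hd : ∑ j, w j • d j = 0) (t : 𝕜) (m : ℕ) (y : E) :
    ∃ u : Fin m → ι, quadraticFun q l a (y + t • ∑ k, d (u k)) ≤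
      quadraticFun q l a y + m * (t ^ 2 * ∑ j, w j * q (d j)) := by
  induction m generalizing y with
  | zero => exact ⟨Fin.elim0, by simp⟩
  | succ m ih =>
    obtain ⟨j, hj⟩ := exists_le_sum_mul_of_mem_stdSimplex hw
      fun j ↦ quadraticFun q l a (y + t • d j)
    rw [sum_mul_quadraticFun_add_smul q l a hw.2 hd] at hj
    obtain ⟨u, hu⟩ := ih (y + t • d j)
    refine ⟨Fin.cons j u, ?_⟩
    simp only [Fin.sum_univ_succ, Fin.cons_zero, Fin.cons_succ, smul_add, ← add_assoc]
    push_cast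
    linarith

theorem maurey_argument_general (hw : w ∈ stdSimplex 𝕜 ι) (x : ι → E) {m : ℕ} (hm : m ≠ 0) :
    ∃ u : Fin m → ι, quadraticFun q l a ((m : 𝕜)⁻¹ • ∑ k, x (u k)) ≤
      quadraticFun q l a (∑ j, w j • x j) +
        (∑ j, w j * q (x j) - q (∑ j, w j • x j)) / m := by
  have hm' : (m : 𝕜) ≠ 0 := Nat.cast_ne_zero.mpr hm
  obtain ⟨u, hu⟩ := exists_quadraticFun_add_smul_sum_le q l a hw
    (sum_smul_sub_sum_smul hw.2 x) (m : 𝕜)⁻¹ m (∑ j, w j • x j)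
  have endpoint : ∑ j, w j • x j + (m : 𝕜)⁻¹ • ∑ k, (x (u k) - ∑ j, w j • x j) =
      (m : 𝕜)⁻¹ • ∑ k, x (u k) := by
    rw [sum_sub_distrib, sum_const, card_univ, Fintype.card_fin, smul_sub,
      ← Nat.cast_smul_eq_nsmul 𝕜, inv_smul_smul₀ hm', add_sub_cancel]
  rw [endpoint, sum_mul_map_sub_sum_smul q hw.2] at hu
  refine ⟨u, hu.trans_eq ?_⟩
  field_simp

end Greedy

section Matrix

open scoped Matrix

variable {n R : Type*} [Fintype n] [DecidableEq n] [CommRing R]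

lemma toQuadraticForm'_apply_eq_dotProduct_mulVec (S : Matrix n n R) (θ : n → R) :
    S.toQuadraticForm' θ = θ ⬝ᵥ (S *ᵥ θ) :=
  S.toLinearMap₂'_apply' θ θ

lemma quadraticFun_toQuadraticForm'_dotProductBilin (S : Matrix n n R) (v : n → R) (a : R)
    (θ : n → R) :
    quadraticFun S.toQuadraticForm' (dotProductBilin R R v) a θ =
      (∑ i, ∑ j, θ i * S i j * θ j) + (∑ j, v j * θ j) + a := by
  simp only [quadraticFun, toQuadraticForm'_apply_eq_dotProduct_mulVec, dotProductBilin_apply_apply,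
    dotProduct, Matrix.mulVec, mul_sum, mul_assoc]

lemma toQuadraticForm'_single_one (S : Matrix n n R) (j : n) :
    S.toQuadraticForm' (Pi.single j 1) = S j j := by
  simp [toQuadraticForm'_apply_eq_dotProduct_mulVec]

lemma toQuadraticForm'_nonneg [PartialOrder R] [StarRing R] [TrivialStar R] {S : Matrix n n R}
    (hS : S.PosSemidef) (θ : n → R) : 0 ≤ S.toQuadraticForm' θ := by
  simpa [toQuadraticForm'_apply_eq_dotProduct_mulVec] using hS.dotProduct_mulVec_nonneg θ

lemma sum_mul_diag_sub_toQuadraticForm'_le_iSup {S : Matrix n n ℝ} (hS : S.PosSemidef)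
    {θ : n → ℝ} (hθ : θ ∈ stdSimplex ℝ n) :
    ∑ j, θ j * S j j - S.toQuadraticForm' θ ≤ ⨆ j, S j j := by
  have diag_le_iSup (j : n) : S.toQuadraticForm' (Pi.single j 1) ≤ ⨆ j, S j j :=
    (toQuadraticForm'_single_one S j).trans_le
      (le_ciSup (f := fun j ↦ S j j) (Set.finite_range _).bddAbove j)
  simpa only [toQuadraticForm'_single_one, ← pi_eq_sum_univ'] using
    sum_mul_map_sub_map_sum_smul_le hθ (toQuadraticForm'_nonneg hS _) diag_le_iSup

end Matrix

lemma gridPoint_eq_inv_smul_sum_single {M m : ℕ} (u : Fin m → Fin M) :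
    gridPoint M m u = (m : ℝ)⁻¹ • ∑ k, Pi.single (u k) 1 := by
  ext j
  simp only [gridPoint, Pi.smul_apply, Finset.sum_apply, Pi.single_apply, eq_comm (a := j),
    smul_eq_mul, div_eq_inv_mul]

/-- **Lemma (Maurey argument)**: for a quadratic function `Q` with positive
semi-definite quadratic part `Σ`, the minimum of `Q` over the grid `Λ^M_m` exceeds
the minimum over the whole simplex by at most `4 max_j Σ_jj / m`.  (The minimum over
the grid is expressed through an existential witness.) -/
theorem maurey_argument
    {M m : ℕ} (hm : 1 ≤ m) (hM : 1 ≤ M)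
    (S : Matrix (Fin M) (Fin M) ℝ) (hS : S.PosSemidef)
    (v : Fin M → ℝ) (a : ℝ) (Q : (Fin M → ℝ) → ℝ)
    (hQ : ∀ θ, Q θ = (∑ i, ∑ j, θ i * S i j * θ j) + (∑ j, v j * θ j) + a) :
    ∀ θ ∈ simplex M, ∃ u : Fin m → Fin M,
      Q (gridPoint M m u) ≤ Q θ + 4 * (⨆ j, S j j) / m := by
  intro θ hθ
  obtain ⟨u, hu⟩ := maurey_argument_general S.toQuadraticForm' (dotProductBilin ℝ ℝ v) a hθ
    (fun j ↦ Pi.single j 1) (Nat.one_le_iff_ne_zero.mp hm)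
  simp only [← gridPoint_eq_inv_smul_sum_single, ← pi_eq_sum_univ', toQuadraticForm'_single_one,
    quadraticFun_toQuadraticForm'_dotProductBilin, ← hQ] at hu
  have variance_le := sum_mul_diag_sub_toQuadraticForm'_le_iSup hS hθ
  have iSup_diag_nonneg : 0 ≤ ⨆ j, S j j := Real.iSup_nonneg fun _ ↦ hS.diag_nonneg
  exact ⟨u, hu.trans (by gcongr; linarith)⟩

end
end

section
/- Let ξ ~ N(0, σ² I_n) in R^n. For any n×n real matrix B and any x > 0, P( ξᵀBξ − σ²Tr B > 2σ²‖B‖_F √x + 2σ²‖B‖_op x ) ≤ exp(−x), where σ²Tr B = E[ξᵀBξ], ‖·‖_F is the Frobenius norm and ‖·‖_op the operator norm. -/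
open MeasureTheory ProbabilityTheory Finset

noncomputable section

/-!
The bound is Chernoff's, applied to a sub-gamma variable. If `Z` is standard Gaussian then
`l * (Z ^ 2 - 1)` has moment generating function `exp (-t l) / √(1 - 2 t l)`, and
`-log (1 - u) ≤ u + u² / (2 (1 - m))` for `u ≤ m` makes it sub-gamma with variance factor `2 l²` and
any scale `c ≥ max (2 l) 0`. For fixed scale, variance factors add over independent summands. A
quadratic form only sees the symmetric part of `B`, and in an orthonormal eigenbasis of that part
the coordinates of a standard Gaussian vector are again i.i.d. standard Gaussian, so the centred
chaos is `σ² ∑ λᵢ (Zᵢ² - 1)` with `∑ λᵢ² ≤ ‖B‖_F²` and `λᵢ ≤ ‖B‖_op`.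
-/

section LogBound

lemma neg_sub_sq_div_le_log_one_sub_of_nonneg {u : ℝ} (hu₀ : 0 ≤ u) (hu₁ : u < 1) :
    -u - u ^ 2 / (2 * (1 - u)) ≤ Real.log (1 - u) := by
  have hpos : 0 < 1 - u := by linarith
  -- This is `y ≤ sinh y` at `y = -log (1 - u)`.
  have hsinh := Real.self_le_sinh_iff.2 (Real.log_nonneg ((one_le_inv₀ hpos).2 (by linarith)))
  rw [Real.sinh_log (by positivity), Real.log_inv, inv_inv] at hsinh
  have hrewrite : -u - u ^ 2 / (2 * (1 - u)) = -(((1 - u)⁻¹ - (1 - u)) / 2) := by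
    field_simp
    ring
  linarith

lemma neg_sub_sq_div_two_le_log_one_sub_of_nonpos {u : ℝ} (hu : u ≤ 0) :
    -u - u ^ 2 / 2 ≤ Real.log (1 - u) :=
  calc -u - u ^ 2 / 2
    _ ≤ 2 * -u / (-u + 2) := by
      rw [le_div_iff₀ (by linarith)]
      nlinarith [mul_nonneg (sq_nonneg u) (neg_nonneg.2 hu)]
    _ ≤ Real.log (1 + -u) := Real.le_log_one_add_of_nonneg (neg_nonneg.2 hu)
    _ = Real.log (1 - u) := by rw [← sub_eq_add_neg]

lemma neg_sub_sq_div_le_log_one_sub {u m : ℝ} (hum : u ≤ m) (hm₀ : 0 ≤ m) (hm₁ : m < 1) :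
    -u - u ^ 2 / (2 * (1 - m)) ≤ Real.log (1 - u) := by
  rcases le_total 0 u with hu | hu
  · have hmono : u ^ 2 / (2 * (1 - u)) ≤ u ^ 2 / (2 * (1 - m)) := by gcongr
    linarith [neg_sub_sq_div_le_log_one_sub_of_nonneg hu (hum.trans_lt hm₁)]
  · have hmono : u ^ 2 / 2 ≤ u ^ 2 / (2 * (1 - m)) := by
      gcongr
      linarith
    linarith [neg_sub_sq_div_two_le_log_one_sub_of_nonpos hu]

lemma inv_sqrt_one_sub_le_exp {u m : ℝ} (hum : u ≤ m) (hm₀ : 0 ≤ m) (hm₁ : m < 1) :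
    (√(1 - u))⁻¹ ≤ Real.exp (u / 2 + u ^ 2 / (4 * (1 - m))) := by
  have hpos : 0 < 1 - u := by linarith
  rw [← Real.exp_log (inv_pos.2 (Real.sqrt_pos.2 hpos)), Real.exp_le_exp, Real.log_inv,
    Real.log_sqrt hpos.le]
  have hlog := neg_sub_sq_div_le_log_one_sub hum hm₀ hm₁
  have hhalf : u ^ 2 / (4 * (1 - m)) = u ^ 2 / (2 * (1 - m)) / 2 := by
    rw [div_div]
    ring_nf
  linarith

end LogBound

section SubGamma

variable {Ω : Type*} {mΩ : MeasurableSpace Ω} {μ : Measure Ω} {X : Ω → ℝ} {v c : ℝ}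

/-- `X` is sub-gamma on the right tail with variance factor `v` and scale `c`: its moment generating
function exists and is at most `exp (v t² / (2 (1 - c t)))` for all `t ≥ 0` with `c t < 1`. The case
`c = 0` is the one-sided sub-Gaussian condition. Such bounds turn into tail bounds of Bernstein
type. -/
structure HasSubgammaMGF (X : Ω → ℝ) (v c : ℝ) (μ : Measure Ω) : Prop where
  integrable_exp_mul : ∀ t, 0 ≤ t → c * t < 1 → Integrable (fun ω ↦ Real.exp (t * X ω)) μ
  mgf_le : ∀ t, 0 ≤ t → c * t < 1 → mgf X μ t ≤ Real.exp (v * t ^ 2 / (2 * (1 - c * t)))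

lemma measure_lt_le_of_forall_lt_measure_le {a : ℝ} {ε : ENNReal}
    (h : ∀ s, a < s → μ {ω | s ≤ X ω} ≤ ε) : μ {ω | a < X ω} ≤ ε := by
  obtain ⟨s, hs_anti, hs_gt, hs_tendsto⟩ := exists_seq_strictAnti_tendsto a
  have hunion : {ω | a < X ω} = ⋃ k, {ω | s k ≤ X ω} := by
    have hIci := congrArg (X ⁻¹' ·) (iUnion_Ici_eq_Ioi_of_lt_of_tendsto hs_gt hs_tendsto)
    simp only [Set.preimage_iUnion] at hIci
    exact hIci.symm
  have hmono : Monotone fun k ↦ {ω | s k ≤ X ω} :=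
    fun _ _ hjk _ hω ↦ (hs_anti.antitone hjk).trans hω
  rw [hunion, hmono.measure_iUnion]
  exact iSup_le fun k ↦ h _ (hs_gt k)

/-- The exponent comes from `t = 1 / (c + r)`, for which the claim reads
`v / (2 r) + r x ≤ s - c x`; `r = (s - c x) / (2 x)` makes the second term half of the right-hand
side. -/
lemma subgamma_exponent_le {x s : ℝ} (hc : 0 ≤ c) (hx : 0 ≤ x) (hs : c * x < s)
    (hsx : 2 * v * x ≤ (s - c * x) ^ 2) :
    v * (2 * x / (s + c * x)) ^ 2 / (2 * (1 - c * (2 * x / (s + c * x))))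
      ≤ 2 * x / (s + c * x) * s - x := by
  have := sub_pos.2 hs
  have hadd : 0 < s + c * x := by nlinarith [mul_nonneg hc hx]
  have hone : 1 - c * (2 * x / (s + c * x)) = (s - c * x) / (s + c * x) := by
    field_simp
    ring
  calc v * (2 * x / (s + c * x)) ^ 2 / (2 * (1 - c * (2 * x / (s + c * x))))
    _ = x / ((s + c * x) * (s - c * x)) * (2 * v * x) := by
      rw [hone]
      field_simp
    _ ≤ x / ((s + c * x) * (s - c * x)) * (s - c * x) ^ 2 := by gcongr
    _ = x * (s - c * x) / (s + c * x) := by field_simp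
    _ = 2 * x / (s + c * x) * s - x := by
      rw [div_mul_eq_mul_div, div_sub' hadd.ne']
      ring

namespace HasSubgammaMGF

lemma mono_variance {v' : ℝ} (h : HasSubgammaMGF X v c μ) (hv : v ≤ v') :
    HasSubgammaMGF X v' c μ where
  integrable_exp_mul := h.integrable_exp_mul
  mgf_le t ht hct := by
    refine (h.mgf_le t ht hct).trans ?_
    have := sub_pos.2 hct
    gcongr

lemma const_mul {k : ℝ} (h : HasSubgammaMGF X v c μ) (hk : 0 ≤ k) :
    HasSubgammaMGF (fun ω ↦ k * X ω) (k ^ 2 * v) (k * c) μ where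
  integrable_exp_mul t ht hct := by
    convert h.integrable_exp_mul (k * t) (by positivity) (by linarith) using 3
    ring
  mgf_le t ht hct := by
    rw [mgf_const_mul]
    convert h.mgf_le (k * t) (by positivity) (by linarith) using 3 <;> ring

lemma comp_hasLaw {Ω' : Type*} {mΩ' : MeasurableSpace Ω'} {ν : Measure Ω'} {Y : Ω' → Ω}
    (h : HasSubgammaMGF X v c μ) (hY : HasLaw Y μ ν) :
    HasSubgammaMGF (fun ω ↦ X (Y ω)) v c ν where
  integrable_exp_mul t ht hct := by
    have hint := h.integrable_exp_mul t ht hct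
    rw [← hY.map_eq] at hint
    exact hint.comp_aemeasurable hY.aemeasurable
  mgf_le t ht hct := by
    have hint := h.integrable_exp_mul t ht hct
    rw [← hY.map_eq] at hint
    rw [← Function.comp_def X Y, ← mgf_map hY.aemeasurable hint.1, hY.map_eq]
    exact h.mgf_le t ht hct

lemma of_comp_hasLaw {Ω' : Type*} {mΩ' : MeasurableSpace Ω'} {ν : Measure Ω'} {Y : Ω' → Ω}
    (hX : Measurable X) (hY : HasLaw Y μ ν) (h : HasSubgammaMGF (fun ω ↦ X (Y ω)) v c ν) :
    HasSubgammaMGF X v c μ := by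
  rw [← hY.map_eq]
  have hmeas (t : ℝ) : AEStronglyMeasurable (fun ω ↦ Real.exp (t * X ω)) (ν.map Y) := by fun_prop
  exact
    { integrable_exp_mul := fun t ht hct ↦
        (integrable_map_measure (hmeas t) hY.aemeasurable).2 (h.integrable_exp_mul t ht hct)
      mgf_le := fun t ht hct ↦
        (mgf_map hY.aemeasurable (hmeas t)).trans_le (h.mgf_le t ht hct) }

lemma sum_of_iIndepFun {ι : Type*} {X : ι → Ω → ℝ} {v : ι → ℝ} (hindep : iIndepFun X μ)
    (hmeas : ∀ i, Measurable (X i)) {s : Finset ι} (h : ∀ i ∈ s, HasSubgammaMGF (X i) (v i) c μ) :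
    HasSubgammaMGF (fun ω ↦ ∑ i ∈ s, X i ω) (∑ i ∈ s, v i) c μ where
  integrable_exp_mul t ht hct := by
    have := hindep.isProbabilityMeasure
    simpa only [Finset.sum_apply] using
      hindep.integrable_exp_mul_sum hmeas fun i hi ↦ (h i hi).integrable_exp_mul t ht hct
  mgf_le t ht hct :=
    calc mgf (fun ω ↦ ∑ i ∈ s, X i ω) μ t
      _ = ∏ i ∈ s, mgf (X i) μ t := by
        rw [← hindep.mgf_sum hmeas, ← Finset.sum_fn]
      _ ≤ ∏ i ∈ s, Real.exp (v i * t ^ 2 / (2 * (1 - c * t))) :=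
        Finset.prod_le_prod (fun _ _ ↦ mgf_nonneg) fun i hi ↦ (h i hi).mgf_le t ht hct
      _ = Real.exp ((∑ i ∈ s, v i) * t ^ 2 / (2 * (1 - c * t))) := by
        rw [← Real.exp_sum, Finset.sum_mul, Finset.sum_div]

variable [IsFiniteMeasure μ] {x : ℝ}

lemma measure_ge_le {s : ℝ} (h : HasSubgammaMGF X v c μ) (hc : 0 ≤ c) (hx : 0 ≤ x)
    (hs : c * x < s) (hsx : 2 * v * x ≤ (s - c * x) ^ 2) :
    μ {ω | s ≤ X ω} ≤ ENNReal.ofReal (Real.exp (-x)) := by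
  have hadd : 0 < s + c * x := by nlinarith [mul_nonneg hc hx]
  set t := 2 * x / (s + c * x) with ht_def
  have ht : 0 ≤ t := by positivity
  have hct : c * t < 1 := by
    rw [ht_def, ← mul_div_assoc, div_lt_one hadd]
    linarith
  rw [ENNReal.le_ofReal_iff_toReal_le (measure_ne_top μ _) (Real.exp_pos _).le]
  calc μ.real {ω | s ≤ X ω}
    _ ≤ Real.exp (-t * s) * mgf X μ t :=
      measure_ge_le_exp_mul_mgf s ht (h.integrable_exp_mul t ht hct)
    _ ≤ Real.exp (-t * s) * Real.exp (v * t ^ 2 / (2 * (1 - c * t))) := by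
      gcongr
      exact h.mgf_le t ht hct
    _ ≤ Real.exp (-x) := by
      rw [← Real.exp_add, Real.exp_le_exp]
      linarith [subgamma_exponent_le hc hx hs hsx]

lemma measure_gt_le (h : HasSubgammaMGF X v c μ) (hc : 0 ≤ c) (hx : 0 ≤ x) :
    μ {ω | √(2 * v * x) + c * x < X ω} ≤ ENNReal.ofReal (Real.exp (-x)) := by
  -- For `v = 0` the level `c * x` itself is not admissible in `measure_ge_le`.
  refine measure_lt_le_of_forall_lt_measure_le fun s hs ↦ ?_
  have hsqrt : √(2 * v * x) < s - c * x := lt_sub_iff_add_lt.2 hs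
  have hpos : 0 < s - c * x := (Real.sqrt_nonneg _).trans_lt hsqrt
  exact h.measure_ge_le hc hx (sub_pos.1 hpos) ((Real.sqrt_le_left hpos.le).1 hsqrt.le)

end HasSubgammaMGF

end SubGamma

section GaussianSquares

variable {w : NNReal} {s : ℝ}

lemma gaussianPDFReal_mul_exp_mul_sq (w : NNReal) (s z : ℝ) :
    gaussianPDFReal 0 w z * Real.exp (s * z ^ 2)
      = (√(2 * Real.pi * w))⁻¹ * Real.exp (-((2 * w : ℝ)⁻¹ - s) * z ^ 2) := by
  rw [gaussianPDFReal, mul_assoc, ← Real.exp_add]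
  ring_nf

lemma integrable_exp_mul_sq_gaussianReal (hs : 2 * w * s < 1) :
    Integrable (fun z : ℝ ↦ Real.exp (s * z ^ 2)) (gaussianReal 0 w) := by
  rcases eq_or_ne w 0 with rfl | hw
  · rw [gaussianReal_zero_var]
    exact integrable_dirac (by simp)
  have hw_pos : (0 : ℝ) < 2 * w := by positivity
  have hrate : 0 < (2 * w : ℝ)⁻¹ - s := by
    rw [sub_pos, ← one_div, lt_div_iff₀ hw_pos]
    linarith
  rw [gaussianReal_of_var_ne_zero _ hw,
    integrable_withDensity_iff_integrable_smul' (measurable_gaussianPDF _ _)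
      (ae_of_all _ fun _ ↦ gaussianPDF_lt_top)]
  simp only [toReal_gaussianPDF, smul_eq_mul, gaussianPDFReal_mul_exp_mul_sq]
  exact (integrable_exp_neg_mul_sq hrate).const_mul _

/-- For `1 ≤ 2 * w * s` both sides take the junk value `0`. -/
lemma mgf_sq_gaussianReal (w : NNReal) (s : ℝ) :
    mgf (fun z ↦ z ^ 2) (gaussianReal 0 w) s = (√(1 - 2 * w * s))⁻¹ := by
  rcases eq_or_ne w 0 with rfl | hw
  · simp [mgf, gaussianReal_zero_var]
  rw [mgf, integral_gaussianReal_eq_integral_smul hw]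
  simp only [smul_eq_mul, gaussianPDFReal_mul_exp_mul_sq]
  rw [integral_const_mul, integral_gaussian, ← Real.sqrt_inv, ← Real.sqrt_mul (by positivity),
    ← Real.sqrt_inv]
  congr 1
  have hw_ne : (w : ℝ) ≠ 0 := by exact_mod_cast hw
  field_simp

lemma hasSubgammaMGF_mul_sq_sub_gaussianReal {l c : ℝ} (hc : 0 ≤ c) (hl : 2 * (l * w) ≤ c) :
    HasSubgammaMGF (fun z ↦ l * (z ^ 2 - w)) (2 * (l * w) ^ 2) c (gaussianReal 0 w) := by
  have hshift (t : ℝ) : (fun z : ℝ ↦ Real.exp (t * (l * (z ^ 2 - w))))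
      = fun z ↦ Real.exp (-(t * l * w)) * Real.exp (t * l * z ^ 2) := by
    ext z
    rw [← Real.exp_add]
    ring_nf
  have hle (t : ℝ) (ht : 0 ≤ t) : 2 * w * (t * l) ≤ c * t := by
    linarith [mul_le_mul_of_nonneg_right hl ht]
  refine ⟨fun t ht hct ↦ ?_, fun t ht hct ↦ ?_⟩
  · rw [hshift]
    exact (integrable_exp_mul_sq_gaussianReal ((hle t ht).trans_lt hct)).const_mul _
  · have := (sub_pos.2 hct).ne'
    calc mgf (fun z ↦ l * (z ^ 2 - w)) (gaussianReal 0 w) t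
      _ = Real.exp (-(t * l * w)) * mgf (fun z ↦ z ^ 2) (gaussianReal 0 w) (t * l) := by
        rw [mgf, hshift, integral_const_mul, mgf]
      _ = Real.exp (-(t * l * w)) * (√(1 - 2 * w * (t * l)))⁻¹ := by
        rw [mgf_sq_gaussianReal]
      _ ≤ Real.exp (-(t * l * w)) * Real.exp (2 * w * (t * l) / 2
            + (2 * w * (t * l)) ^ 2 / (4 * (1 - c * t))) := by
        gcongr
        exact inv_sqrt_one_sub_le_exp (hle t ht) (by positivity) hct
      _ = Real.exp (2 * (l * w) ^ 2 * t ^ 2 / (2 * (1 - c * t))) := by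
        rw [← Real.exp_add]
        congr 1
        field_simp
        ring

lemma hasSubgammaMGF_sum_mul_sq_sub {Ω ι : Type*} {mΩ : MeasurableSpace Ω} {μ : Measure Ω}
    [Fintype ι] {Z : ι → Ω → ℝ} {w : ι → NNReal} {l : ι → ℝ} {c : ℝ} (hindep : iIndepFun Z μ)
    (hmeas : ∀ i, Measurable (Z i)) (hlaw : ∀ i, HasLaw (Z i) (gaussianReal 0 (w i)) μ)
    (hc : 0 ≤ c) (hl : ∀ i, 2 * (l i * w i) ≤ c) :
    HasSubgammaMGF (fun ω ↦ ∑ i, l i * (Z i ω ^ 2 - w i)) (∑ i, 2 * (l i * w i) ^ 2) c μ :=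
  HasSubgammaMGF.sum_of_iIndepFun
    (hindep.comp (fun i z ↦ l i * (z ^ 2 - w i)) fun i ↦ by fun_prop)
    (fun i ↦ by simp only [Function.comp_def]; fun_prop)
    fun i _ ↦ (hasSubgammaMGF_mul_sq_sub_gaussianReal hc (hl i)).comp_hasLaw (hlaw i)

end GaussianSquares

section StdGaussian

variable {ι E : Type*} [Fintype ι] [NormedAddCommGroup E] [InnerProductSpace ℝ E]
  [FiniteDimensional ℝ E] [MeasurableSpace E] [BorelSpace E]

lemma hasLaw_inner_orthonormalBasis_stdGaussian (b : OrthonormalBasis ι ℝ E) :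
    HasLaw (fun y i ↦ inner ℝ (b i) y) (Measure.pi fun _ : ι ↦ gaussianReal 0 1)
      (stdGaussian E) where
  map_eq := by
    rw [stdGaussian_eq_map_pi_orthonormalBasis b, Measure.map_map (by fun_prop) (by fun_prop)]
    convert Measure.map_id
    ext z i
    simp [b.orthonormal.inner_right_fintype]

lemma hasSubgammaMGF_sum_mul_sq_inner_sub_one (b : OrthonormalBasis ι ℝ E) {l : ι → ℝ} {c : ℝ}
    (hc : 0 ≤ c) (hl : ∀ i, 2 * l i ≤ c) :
    HasSubgammaMGF (fun y ↦ ∑ i, l i * (inner ℝ (b i) y ^ 2 - 1)) (2 * ∑ i, l i ^ 2) c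
      (stdGaussian E) := by
  have hlaw := hasLaw_inner_orthonormalBasis_stdGaussian b
  have hlaw_coord (i : ι) : HasLaw (fun y ↦ inner ℝ (b i) y) (gaussianReal 0 1) (stdGaussian E) :=
    (measurePreserving_eval _ i).fun_comp_hasLaw hlaw
  have hindep : iIndepFun (fun i y ↦ inner ℝ (b i) y) (stdGaussian E) :=
    (iIndepFun_iff_hasLaw_pi_pi hlaw_coord).2 hlaw
  simpa [Finset.mul_sum] using
    hasSubgammaMGF_sum_mul_sq_sub hindep (fun i ↦ by fun_prop) hlaw_coord hc
      (l := l) (by simpa using hl)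

end StdGaussian

section Spectral

open Matrix

variable {ι : Type*} [Fintype ι]

section Hermitian

variable [DecidableEq ι] {A : Matrix ι ι ℝ} (hA : A.IsHermitian)

lemma trace_mul_self_eq_sum_sq_eigenvalues {𝕜 : Type*} [RCLike 𝕜] {A : Matrix ι ι 𝕜}
    (hA : A.IsHermitian) : (A * A).trace = ∑ i, (hA.eigenvalues i : 𝕜) ^ 2 := by
  conv_lhs => rw [hA.spectral_theorem]
  rw [← map_mul, Unitary.conjStarAlgAut_apply, trace_mul_comm, ← mul_assoc]
  simp [diagonal_mul_diagonal, trace_diagonal, sq]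

lemma inner_eigenvectorBasis_toLp_mulVec (y : EuclideanSpace ℝ ι) (i : ι) :
    inner ℝ (hA.eigenvectorBasis i) (WithLp.toLp 2 (A *ᵥ y.ofLp))
      = hA.eigenvalues i * inner ℝ (hA.eigenvectorBasis i) y := by
  have hAT : Aᵀ = A := (conjTranspose_eq_transpose_of_trivial A).symm.trans hA
  simp only [EuclideanSpace.inner_eq_star_dotProduct, star_trivial]
  rw [dotProduct_comm, dotProduct_mulVec, ← mulVec_transpose, hAT, hA.mulVec_eigenvectorBasis,
    smul_dotProduct, smul_eq_mul, dotProduct_comm]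

lemma dotProduct_mulVec_eq_sum_eigenvalues_mul_sq_inner (y : EuclideanSpace ℝ ι) :
    y.ofLp ⬝ᵥ A *ᵥ y.ofLp = ∑ i, hA.eigenvalues i * inner ℝ (hA.eigenvectorBasis i) y ^ 2 :=
  calc y.ofLp ⬝ᵥ A *ᵥ y.ofLp
    _ = inner ℝ y (WithLp.toLp 2 (A *ᵥ y.ofLp)) := by
      rw [EuclideanSpace.inner_eq_star_dotProduct, star_trivial, dotProduct_comm]
    _ = ∑ i, inner ℝ y (hA.eigenvectorBasis i)
          * inner ℝ (hA.eigenvectorBasis i) (WithLp.toLp 2 (A *ᵥ y.ofLp)) :=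
      (hA.eigenvectorBasis.sum_inner_mul_inner _ _).symm
    _ = ∑ i, hA.eigenvalues i * inner ℝ (hA.eigenvectorBasis i) y ^ 2 := by
      refine Finset.sum_congr rfl fun i _ ↦ ?_
      rw [inner_eigenvectorBasis_toLp_mulVec hA, real_inner_comm]
      ring

lemma hasSubgammaMGF_dotProduct_mulVec_sub_trace_of_isHermitian {c : ℝ} (hc : 0 ≤ c)
    (hle : ∀ i, 2 * hA.eigenvalues i ≤ c) :
    HasSubgammaMGF (fun y ↦ y.ofLp ⬝ᵥ A *ᵥ y.ofLp - A.trace) (2 * (A * A).trace) c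
      (stdGaussian (EuclideanSpace ℝ ι)) := by
  have htrace : A.trace = ∑ i, hA.eigenvalues i := hA.trace_eq_sum_eigenvalues
  have htrace_sq : (A * A).trace = ∑ i, hA.eigenvalues i ^ 2 :=
    trace_mul_self_eq_sum_sq_eigenvalues hA
  convert hasSubgammaMGF_sum_mul_sq_inner_sub_one hA.eigenvectorBasis hc hle using 1
  · ext y
    rw [dotProduct_mulVec_eq_sum_eigenvalues_mul_sq_inner hA, htrace, ← Finset.sum_sub_distrib]
    exact Finset.sum_congr rfl fun i _ ↦ by ring
  · rw [htrace_sq]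

end Hermitian

lemma dotProduct_selfAdjointPart_mulVec (B : Matrix ι ι ℝ) (y : ι → ℝ) :
    y ⬝ᵥ (selfAdjointPart ℝ B : Matrix ι ι ℝ) *ᵥ y = y ⬝ᵥ B *ᵥ y := by
  have htranspose : y ⬝ᵥ Bᵀ *ᵥ y = y ⬝ᵥ B *ᵥ y := by
    rw [mulVec_transpose, dotProduct_comm, dotProduct_mulVec]
  rw [selfAdjointPart_apply_coe, star_eq_conjTranspose, conjTranspose_eq_transpose_of_trivial,
    smul_mulVec, add_mulVec, dotProduct_smul, dotProduct_add, htranspose, ← two_smul ℝ, smul_smul,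
    invOf_mul_self, one_smul]

lemma trace_selfAdjointPart (B : Matrix ι ι ℝ) :
    (selfAdjointPart ℝ B : Matrix ι ι ℝ).trace = B.trace := by
  rw [selfAdjointPart_apply_coe, star_eq_conjTranspose, conjTranspose_eq_transpose_of_trivial,
    trace_smul, trace_add, trace_transpose, ← two_smul ℝ, smul_smul, invOf_mul_self, one_smul]

end Spectral

section Norms

open Matrix

variable {n : ℕ} (B : Matrix (Fin n) (Fin n) ℝ)

lemma sqNorm_ofLp (v : EuclideanSpace ℝ (Fin n)) : sqNorm v.ofLp = ‖v‖ ^ 2 := by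
  rw [sqNorm, EuclideanSpace.real_norm_sq_eq]

lemma sqrt_sqNorm_mulVec (v : EuclideanSpace ℝ (Fin n)) :
    √(sqNorm (B *ᵥ v.ofLp)) = ‖toEuclideanCLM (𝕜 := ℝ) B v‖ := by
  rw [← ofLp_toEuclideanCLM, sqNorm_ofLp, Real.sqrt_sq (norm_nonneg _)]

lemma opNorm_eq_norm_toEuclideanCLM_s17 : opNorm B = ‖toEuclideanCLM (𝕜 := ℝ) B‖ := by
  rw [opNorm, ← ContinuousLinearMap.sSup_unitClosedBall_eq_norm]
  congr 1
  ext a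
  constructor
  · rintro ⟨v, hv, rfl⟩
    refine ⟨WithLp.toLp 2 v, ?_, ?_⟩
    · rwa [mem_closedBall_zero_iff, ← sq_le_one_iff₀ (norm_nonneg _), ← sqNorm_ofLp]
    · exact (sqrt_sqNorm_mulVec B (WithLp.toLp 2 v)).symm
  · rintro ⟨v, hv, rfl⟩
    rw [mem_closedBall_zero_iff, ← sq_le_one_iff₀ (norm_nonneg _), ← sqNorm_ofLp] at hv
    exact ⟨v.ofLp, hv, (sqrt_sqNorm_mulVec B v).symm⟩

lemma opNorm_nonneg : 0 ≤ opNorm B := by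
  rw [opNorm_eq_norm_toEuclideanCLM_s17]
  exact norm_nonneg _

lemma dotProduct_mulVec_le_opNorm {v : EuclideanSpace ℝ (Fin n)} (hv : ‖v‖ = 1) :
    v.ofLp ⬝ᵥ B *ᵥ v.ofLp ≤ opNorm B :=
  calc v.ofLp ⬝ᵥ B *ᵥ v.ofLp
    _ = inner ℝ v (toEuclideanCLM (𝕜 := ℝ) B v) := by
      rw [EuclideanSpace.inner_eq_star_dotProduct, star_trivial, ofLp_toEuclideanCLM,
        dotProduct_comm]
    _ ≤ ‖v‖ * ‖toEuclideanCLM (𝕜 := ℝ) B v‖ := real_inner_le_norm _ _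
    _ ≤ ‖v‖ * (‖toEuclideanCLM (𝕜 := ℝ) B‖ * ‖v‖) := by
      gcongr
      exact ContinuousLinearMap.le_opNorm _ _
    _ = opNorm B := by rw [hv, one_mul, mul_one, opNorm_eq_norm_toEuclideanCLM_s17]

lemma eigenvalues_selfAdjointPart_le_opNorm
    (hB : (selfAdjointPart ℝ B : Matrix (Fin n) (Fin n) ℝ).IsHermitian) (i : Fin n) :
    hB.eigenvalues i ≤ opNorm B := by
  rw [hB.eigenvalues_eq]
  have hquad := dotProduct_mulVec_le_opNorm B (hB.eigenvectorBasis.norm_eq_one i)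
  rw [← dotProduct_selfAdjointPart_mulVec] at hquad
  simpa using hquad

lemma trace_selfAdjointPart_mul_self_le_frobSq :
    ((selfAdjointPart ℝ B : Matrix (Fin n) (Fin n) ℝ) * selfAdjointPart ℝ B).trace ≤ frobSq B := by
  have hentries : ((selfAdjointPart ℝ B : Matrix (Fin n) (Fin n) ℝ) * selfAdjointPart ℝ B).trace
      = ∑ i, ∑ j, ((B i j + B j i) / 2) ^ 2 := by
    simp only [trace, diag_apply, mul_apply, selfAdjointPart_apply_coe, Matrix.smul_apply,
      Matrix.add_apply, star_apply, star_trivial, invOf_eq_inv, smul_eq_mul]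
    exact Finset.sum_congr rfl fun i _ ↦ Finset.sum_congr rfl fun j _ ↦ by ring
  have htranspose : ∑ i, ∑ j, B j i ^ 2 = ∑ i, ∑ j, B i j ^ 2 := Finset.sum_comm
  calc ((selfAdjointPart ℝ B : Matrix (Fin n) (Fin n) ℝ) * selfAdjointPart ℝ B).trace
    _ = ∑ i, ∑ j, ((B i j + B j i) / 2) ^ 2 := hentries
    _ ≤ ∑ i, ∑ j, (B i j ^ 2 + B j i ^ 2) / 2 := by
      gcongr with i _ j _
      linarith [sq_nonneg (B i j - B j i)]
    _ = frobSq B := by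
      simp only [← Finset.sum_div, Finset.sum_add_distrib, htranspose, frobSq, add_self_div_two]

end Norms

section GaussianChaos

open Matrix

variable {n : ℕ} (B : Matrix (Fin n) (Fin n) ℝ)

lemma hasSubgammaMGF_dotProduct_mulVec_sub_trace :
    HasSubgammaMGF (fun y ↦ y.ofLp ⬝ᵥ B *ᵥ y.ofLp - B.trace) (2 * frobSq B) (2 * opNorm B)
      (stdGaussian (EuclideanSpace ℝ (Fin n))) := by
  have hherm : (selfAdjointPart ℝ B : Matrix (Fin n) (Fin n) ℝ).IsHermitian :=
    (selfAdjointPart ℝ B).2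
  have hop : 0 ≤ 2 * opNorm B := mul_nonneg zero_le_two (opNorm_nonneg B)
  have hsymm := hasSubgammaMGF_dotProduct_mulVec_sub_trace_of_isHermitian hherm hop fun i ↦
    mul_le_mul_of_nonneg_left (eigenvalues_selfAdjointPart_le_opNorm B hherm i) zero_le_two
  simp only [dotProduct_selfAdjointPart_mulVec, trace_selfAdjointPart] at hsymm
  exact hsymm.mono_variance
    (mul_le_mul_of_nonneg_left (trace_selfAdjointPart_mul_self_le_frobSq B) zero_le_two)

lemma hasLaw_smul_ofLp_gaussPi (n : ℕ) (σ : ℝ) :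
    HasLaw (fun y : EuclideanSpace ℝ (Fin n) ↦ σ • y.ofLp) (gaussPi n σ) (stdGaussian _) where
  map_eq := by
    rw [← map_pi_eq_stdGaussian, Measure.map_map (by fun_prop) (by fun_prop)]
    have hpi := Measure.pi_map_pi (μ := fun _ : Fin n ↦ gaussianReal 0 1)
      (f := fun _ z ↦ σ * z) fun _ ↦ by fun_prop
    simp only [gaussianReal_map_const_mul, mul_zero, mul_one] at hpi
    exact hpi

lemma hasSubgammaMGF_dotProduct_mulVec_gaussPi (σ : ℝ) :
    HasSubgammaMGF (fun y ↦ y ⬝ᵥ B *ᵥ y - σ ^ 2 * B.trace) ((σ ^ 2) ^ 2 * (2 * frobSq B))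
      (σ ^ 2 * (2 * opNorm B)) (gaussPi n σ) := by
  have hmeas : Measurable fun y : Fin n → ℝ ↦ y ⬝ᵥ B *ᵥ y - σ ^ 2 * B.trace := by
    unfold mulVec dotProduct
    fun_prop
  refine .of_comp_hasLaw hmeas (hasLaw_smul_ofLp_gaussPi n σ) ?_
  convert (hasSubgammaMGF_dotProduct_mulVec_sub_trace B).const_mul (sq_nonneg σ) using 2 with y
  rw [mulVec_smul, smul_dotProduct, dotProduct_smul, smul_eq_mul, smul_eq_mul]
  ring

end GaussianChaos

/-- **Lemma 3.1 (concentration of a Gaussian chaos of order two)**. -/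
theorem gaussian_chaos_concentration
    {n : ℕ} (σ : ℝ)
    {Ω : Type} [MeasurableSpace Ω] (P : Measure Ω) [IsProbabilityMeasure P]
    (ξ : Ω → Fin n → ℝ) (hξ : Measurable ξ) (hlaw : P.map ξ = gaussPi n σ)
    (B : Matrix (Fin n) (Fin n) ℝ) (x : ℝ) (hx : 0 < x) :
    P {ω | σ ^ 2 * B.trace + 2 * σ ^ 2 * Real.sqrt (frobSq B) * Real.sqrt x
             + 2 * σ ^ 2 * opNorm B * x
           < ∑ i, ξ ω i * (B.mulVec (ξ ω)) i}
      ≤ ENNReal.ofReal (Real.exp (-x)) := by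
  have hchaos : HasSubgammaMGF (fun ω ↦ ∑ i, ξ ω i * (B.mulVec (ξ ω)) i - σ ^ 2 * B.trace)
      ((σ ^ 2) ^ 2 * (2 * frobSq B)) (σ ^ 2 * (2 * opNorm B)) P :=
    (hasSubgammaMGF_dotProduct_mulVec_gaussPi B σ).comp_hasLaw ⟨hξ.aemeasurable, hlaw⟩
  have hscale : 0 ≤ σ ^ 2 * (2 * opNorm B) :=
    mul_nonneg (sq_nonneg σ) (mul_nonneg zero_le_two (opNorm_nonneg B))
  have hdeviation : √(2 * ((σ ^ 2) ^ 2 * (2 * frobSq B)) * x) = 2 * σ ^ 2 * √(frobSq B) * √x := by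
    rw [show 2 * ((σ ^ 2) ^ 2 * (2 * frobSq B)) * x = (2 * σ ^ 2) ^ 2 * frobSq B * x by ring,
      Real.sqrt_mul' _ hx.le, Real.sqrt_mul (by positivity), Real.sqrt_sq (by positivity)]
  refine (measure_mono fun ω hω ↦ ?_).trans (hchaos.measure_gt_le hscale hx.le)
  rw [Set.mem_ofPred_eq] at hω ⊢
  linarith

end
end
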